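/- arXiv:2302.13478 — 6 statements merged into one kernel-verified Lean document; each statement's English description precedes it below -/
import Mathlib

section
/- The polynomial X^(2q²+1) + hX + e has exactly three roots in F_{q³}. -/
open Polynomial

local notation "K" => AlgebraicClosure (ZMod 2)

/-!
Let `σ` be the `q`-power Frobenius. For `σ³ x = x` the equation says `σ x = φ x` with
`φ x = e / (x² + h)`. The fixed points of `φ` are the roots `a, b, a + b` of `X³ + hX + e`, and
the Möbius coordinate `u` on the projective line taking the values `0, ∞, 1` there turns `φ` into
`u ↦ u²`. The relation `h³ = e² + e + 1` makes `σ` act on the three roots by an even permutation.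
If `σ` fixes them, the equation reads `σ u = u²`; then `u⁸ = σ³ u = u`, and as `σ` is not the
Frobenius on `F₈`, only `u = 0, 1, ∞` remain. If `σ` permutes them cyclically, it reads
`σ u = 1 / (u + 1)²`; again `u⁸ = u`, and the solutions are the three roots of one of the two
irreducible cubics over `F₂`.
-/

section Field

variable {F : Type*} [Field F]

/-- The inverse of the Möbius coordinate `x ↦ a (x + a) / (b (x + b))` in characteristic two, which
sends the roots `a`, `b`, `a + b` of `X³ + hX + e` to `0`, `∞`, `1`. The value at the pole
`a + u * b = 0` is junk. -/
def cubicParam (a b u : F) : F := (a ^ 2 + u * b ^ 2) / (a + u * b)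

/-- In characteristic two, a root of the quadratic resolvent `Y² + eY + h³ + e²` of the cubic
`X³ + hX + e` with roots `a`, `b`, `a + b`. It is invariant under cyclic permutations of the roots,
and transpositions exchange it with the other root. -/
def cubicResolvent (a b : F) : F := a ^ 3 + a ^ 2 * b + b ^ 3

/-- The points `x` fixed by `σ³` with `σ x = e / (x² + h)`, written without division. -/
def twistedRoots (σ : F →+* F) (h e : F) : Set F :=
  {x | σ (σ (σ x)) = x ∧ σ x * (x ^ 2 + h) = e}

/-- The parameters `u` for which `cubicParam a b u` is a twisted root, when `σ` permutes the roots
`a`, `b`, `a + b` of the cubic cyclically. -/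
def cycleParams (σ : F →+* F) : Set F :=
  {u | σ (σ (σ u)) = u ∧ σ u * (u + 1) ^ 2 = 1}

lemma map_cubicParam (σ : F →+* F) (a b u : F) :
    σ (cubicParam a b u) = cubicParam (σ a) (σ b) (σ u) := by
  simp only [cubicParam, map_div₀, map_add, map_mul, map_pow]

lemma map_cubicResolvent (σ : F →+* F) (a b : F) :
    σ (cubicResolvent a b) = cubicResolvent (σ a) (σ b) := by
  simp only [cubicResolvent, map_add, map_mul, map_pow]

lemma map_depressed_cubic_eq_zero {σ : F →+* F} {h e x : F} (hh : σ h = h) (he : σ e = e)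
    (hx : x ^ 3 + h * x + e = 0) : σ x ^ 3 + h * σ x + e = 0 := by
  simpa only [map_add, map_mul, map_pow, map_zero, hh, he] using congrArg σ hx

lemma pow_two_pow_mod_three {u : F} (hu : u ^ 8 = u) (m : ℕ) : u ^ 2 ^ (m % 3) = u ^ 2 ^ m := by
  have hperiodic : Function.IsPeriodicPt (fun x : F => x ^ 2) 3 u := by
    simpa only [Function.IsPeriodicPt, Function.IsFixedPt, pow_iterate] using hu
  simpa only [pow_iterate] using hperiodic.iterate_mod_apply m

end Field

section CharTwo

variable {F : Type*} [Field F] [CharP F 2]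

lemma separable_depressed_cubic {h e : F} (he : e ≠ 0) :
    (X ^ 3 + C h * X + C e : F[X]).Separable := by
  refine ⟨C e⁻¹, C e⁻¹ * X, ?_⟩
  have hinv : (C e⁻¹ * C e : F[X]) = 1 := by rw [← C_mul, inv_mul_cancel₀ he, C_1]
  simp only [derivative_add, derivative_C_mul, derivative_X_pow, derivative_C, derivative_X]
  grind

lemma ncard_depressed_cubic_roots [IsAlgClosed F] {h e : F} (he : e ≠ 0) :
    {x : F | x ^ 3 + h * x + e = 0}.ncard = 3 := by
  have hdeg : (X ^ 3 + C h * X + C e : F[X]).natDegree = 3 := by compute_degree!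
  have hroots : (X ^ 3 + C h * X + C e : F[X]).rootSet F = {x | x ^ 3 + h * x + e = 0} := by
    ext x
    simp [mem_rootSet, ne_zero_of_natDegree_gt (hdeg ▸ three_pos)]
  rw [← hroots, ← Nat.card_coe_set_eq, Nat.card_eq_fintype_card,
    card_rootSet_eq_natDegree (separable_depressed_cubic he) (IsAlgClosed.splits _), hdeg]

lemma exists_depressed_cubic_roots [IsAlgClosed F] {h e : F} (he : e ≠ 0) :
    ∃ a b : F, h = a ^ 2 + a * b + b ^ 2 ∧ e = a * b * (a + b) := by
  obtain ⟨a, b, c, hab, -, -, hroots⟩ :=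
    Set.ncard_eq_three.1 (ncard_depressed_cubic_roots (h := h) he)
  have ha : a ^ 3 + h * a + e = 0 := hroots.ge (by simp)
  have hb : b ^ 3 + h * b + e = 0 := hroots.ge (by simp)
  have hh : h = a ^ 2 + a * b + b ^ 2 := by grind
  exact ⟨a, b, hh, by grind⟩

lemma depressed_cubic_eq_zero_iff {a b x : F} :
    x ^ 3 + (a ^ 2 + a * b + b ^ 2) * x + a * b * (a + b) = 0 ↔ x = a ∨ x = b ∨ x = a + b := by
  have hfactor : x ^ 3 + (a ^ 2 + a * b + b ^ 2) * x + a * b * (a + b) =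
      (x + a) * ((x + b) * (x + (a + b))) := by grind
  simp only [hfactor, mul_eq_zero, CharTwo.add_eq_zero]

/-! ### The field with eight elements -/

lemma sq_eq_self_or_cubic_eq_zero_of_pow_eight_eq {u : F} (hu : u ^ 8 = u) :
    u ^ 2 = u ∨ u ^ 3 + u + 1 = 0 ∨ (u + 1) ^ 3 + (u + 1) + 1 = 0 := by
  have hfactor : (u ^ 2 + u) * ((u ^ 3 + u + 1) * ((u + 1) ^ 3 + (u + 1) + 1)) = 0 := by grind
  simpa only [mul_eq_zero, CharTwo.add_eq_zero (a := u ^ 2)] using hfactor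

lemma pow_eight_eq_of_cubic_eq_zero {w : F} (hw : w ^ 3 + w + 1 = 0) : w ^ 8 = w := by grind

lemma cubic_eq_zero_iff_of_cubic_eq_zero {w u : F} (hw : w ^ 3 + w + 1 = 0) :
    u ^ 3 + u + 1 = 0 ↔ u = w ∨ u = w ^ 2 ∨ u = w ^ 4 := by
  have hfactor : u ^ 3 + u + 1 = (u + w) * ((u + w ^ 2) * (u + w ^ 4)) := by grind
  simp only [hfactor, mul_eq_zero, CharTwo.add_eq_zero]

lemma pow_two_pow_ne_sq_of_cubic_eq_zero {w : F} (hw : w ^ 3 + w + 1 = 0) {m : ℕ}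
    (hm : m % 3 ≠ 1) : w ^ 2 ^ m ≠ w ^ 2 := by
  rw [← pow_two_pow_mod_three (pow_eight_eq_of_cubic_eq_zero hw)]
  obtain hm | hm : m % 3 = 0 ∨ m % 3 = 2 := by lia
  · rw [hm]
    grind
  · rw [hm]
    grind

variable {σ : F →+* F}

lemma forall_map_eq_self_or_forall_map_eq_pow_four
    (hσ : ∀ w : F, w ^ 3 + w + 1 = 0 → σ w ≠ w ^ 2) :
    (∀ w, w ^ 3 + w + 1 = 0 → σ w = w) ∨ ∀ w, w ^ 3 + w + 1 = 0 → σ w = w ^ 4 := by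
  by_cases! hroot : ∃ w : F, w ^ 3 + w + 1 = 0
  · obtain ⟨w, hw⟩ := hroot
    have hσw : σ w ^ 3 + σ w + 1 = 0 := by
      simpa only [map_add, map_pow, map_one, map_zero] using congrArg σ hw
    rcases (cubic_eq_zero_iff_of_cubic_eq_zero hw).1 hσw with hfix | hfrob | hfour
    · left
      intro u hu
      rcases (cubic_eq_zero_iff_of_cubic_eq_zero hw).1 hu with rfl | rfl | rfl <;>
        simp only [map_pow, hfix]
    · exact absurd hfrob (hσ w hw)
    · right
      intro u hu
      rcases (cubic_eq_zero_iff_of_cubic_eq_zero hw).1 hu with rfl | rfl | rfl <;>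
        simp only [map_pow, hfour, ← pow_mul]
  · exact Or.inl fun w hw => absurd hw (hroot w)

/-- The Möbius map `u ↦ 1 / (u + 1)` has order three and commutes with squaring. -/
lemma pow_eight_eq_of_mem_cycleParams {u : F} (hu : u ∈ cycleParams σ) : u ^ 8 = u := by
  obtain ⟨hu3, hu⟩ := hu
  have hσu : σ (σ u) * (σ u + 1) ^ 2 = 1 := by simpa using congrArg σ hu
  have hσσu : u * (σ (σ u) + 1) ^ 2 = 1 := by simpa [hu3] using congrArg σ hσu
  have hsecond : σ (σ u) * u ^ 4 = (u + 1) ^ 4 :=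
    calc σ (σ u) * u ^ 4 = σ (σ u) * (σ u * (u + 1) ^ 2 + (u + 1) ^ 2) ^ 2 := by rw [hu]; grind
      _ = σ (σ u) * (σ u + 1) ^ 2 * (u + 1) ^ 4 := by ring
      _ = (u + 1) ^ 4 := by rw [hσu, one_mul]
  calc u ^ 8 = u * (σ (σ u) + 1) ^ 2 * u ^ 8 := by rw [hσσu, one_mul]
    _ = u * (σ (σ u) * u ^ 4 + u ^ 4) ^ 2 := by ring
    _ = u := by rw [hsecond]; grind

lemma cubic_eq_zero_or_of_mem_cycleParams {u : F} (hu : u ∈ cycleParams σ) :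
    u ^ 3 + u + 1 = 0 ∨ (u + 1) ^ 3 + (u + 1) + 1 = 0 := by
  refine (sq_eq_self_or_cubic_eq_zero_of_pow_eight_eq
    (pow_eight_eq_of_mem_cycleParams hu)).resolve_left fun hsq => ?_
  have hu01 : u * (u + 1) = 0 := by grind
  rcases mul_eq_zero.1 hu01 with h0 | h1
  · simpa [h0] using hu.2
  · simpa [h1] using hu.2

lemma cycleParams_eq_of_map_eq_self (hσ : ∀ w, w ^ 3 + w + 1 = 0 → σ w = w) :
    cycleParams σ = {u | u ^ 3 + u + 1 = 0} := by
  ext u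
  constructor
  · intro hu
    have hσu : σ u = u := by
      rcases cubic_eq_zero_or_of_mem_cycleParams hu with hw | hw
      · exact hσ u hw
      · simpa using hσ (u + 1) hw
    have hu1 : u * (u + 1) ^ 2 = 1 := by simpa only [hσu] using hu.2
    change u ^ 3 + u + 1 = 0
    grind
  · intro (hw : u ^ 3 + u + 1 = 0)
    have hσu : σ u = u := hσ u hw
    refine ⟨by simp only [hσu], ?_⟩
    grind

lemma cycleParams_eq_of_map_eq_pow_four (hσ : ∀ w, w ^ 3 + w + 1 = 0 → σ w = w ^ 4) :
    cycleParams σ = (· + 1) ⁻¹' {w | w ^ 3 + w + 1 = 0} := by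
  ext u
  constructor
  · intro hu
    refine (cubic_eq_zero_or_of_mem_cycleParams hu).resolve_left fun hw => ?_
    have hu1 : u ^ 4 * (u + 1) ^ 2 = 1 := hσ u hw ▸ hu.2
    grind
  · intro (hw : (u + 1) ^ 3 + (u + 1) + 1 = 0)
    have hσu : σ u = u ^ 4 := by
      have hσu1 : σ u + 1 = (u + 1) ^ 4 := by simpa using hσ (u + 1) hw
      grind
    have hu8 : u ^ 8 = u := by grind
    refine ⟨?_, by rw [hσu]; grind⟩
    calc σ (σ (σ u)) = (u ^ 8) ^ 8 := by simp only [hσu, map_pow]; ring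
      _ = u := by rw [hu8, hu8]

lemma ncard_cycleParams [IsAlgClosed F] (hσ : ∀ w : F, w ^ 3 + w + 1 = 0 → σ w ≠ w ^ 2) :
    (cycleParams σ).ncard = 3 := by
  have hcount : {w : F | w ^ 3 + w + 1 = 0}.ncard = 3 := by
    simpa only [one_mul] using ncard_depressed_cubic_roots (h := 1) (one_ne_zero (α := F))
  rcases forall_map_eq_self_or_forall_map_eq_pow_four hσ with hfix | hfour
  · rw [cycleParams_eq_of_map_eq_self hfix, hcount]
  · rw [cycleParams_eq_of_map_eq_pow_four hfour,
      Set.ncard_preimage_of_injective_subset_range (add_left_injective 1), hcount]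
    exact fun w _ => ⟨w - 1, sub_add_cancel w 1⟩

/-! ### The Möbius parametrization -/

variable {a b : F}

lemma cubicParam_eq_cubicParam_iff (he : a * b * (a + b) ≠ 0) {u v : F} (hu : a + u * b ≠ 0)
    (hv : a + v * b ≠ 0) : cubicParam a b u = cubicParam a b v ↔ u = v := by
  rw [cubicParam, cubicParam, div_eq_div_iff hu hv]
  refine ⟨fun huv => mul_left_cancel₀ he ?_, fun huv => by rw [huv]⟩
  grind

lemma exists_cubicParam_eq (he : a * b * (a + b) ≠ 0) {x : F} (hx : x ≠ b) :
    ∃ u, a + u * b ≠ 0 ∧ cubicParam a b u = x := by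
  have hxb : x + b ≠ 0 := fun h => hx (CharTwo.add_eq_zero.1 h)
  have hb : b ≠ 0 := by grind
  have hden : a + a * (x + a) / (b * (x + b)) * b = a * (a + b) / (x + b) := by grind
  have hden0 : a + a * (x + a) / (b * (x + b)) * b ≠ 0 := by
    rw [hden]
    exact div_ne_zero (by grind) hxb
  refine ⟨a * (x + a) / (b * (x + b)), hden0, ?_⟩
  rw [cubicParam, div_eq_iff hden0]
  grind

/-- As `(a + u * b) ^ 2 = a ^ 2 + u ^ 2 * b ^ 2`, the right-hand side says
`y = cubicParam a b (u ^ 2)`. -/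
lemma mul_cubicParam_sq_add_eq_iff (he : a * b * (a + b) ≠ 0) {u : F} (hu : a + u * b ≠ 0)
    (y : F) :
    y * (cubicParam a b u ^ 2 + (a ^ 2 + a * b + b ^ 2)) = a * b * (a + b) ↔
      y * (a + u ^ 2 * b) = a ^ 2 + u ^ 2 * b ^ 2 := by
  have hsq : cubicParam a b u ^ 2 + (a ^ 2 + a * b + b ^ 2) =
      a * b * (a + b) * (a + u ^ 2 * b) / (a + u * b) ^ 2 := by
    rw [cubicParam, eq_div_iff (pow_ne_zero 2 hu), add_mul, div_pow,
      div_mul_cancel₀ _ (pow_ne_zero 2 hu)]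
    grind
  have hfrob : (a + u * b) ^ 2 = a ^ 2 + u ^ 2 * b ^ 2 := by grind
  rw [hsq, mul_div_assoc', div_eq_iff (pow_ne_zero 2 hu), hfrob, mul_left_comm,
    mul_right_inj' he]

lemma map_cubicParam_eq_self_iff (ha : σ a = a) (hb : σ b = b) (he : a * b * (a + b) ≠ 0) {u : F}
    (hu : a + u * b ≠ 0) : σ (cubicParam a b u) = cubicParam a b u ↔ σ u = u := by
  have hσu : a + σ u * b ≠ 0 := by
    simpa only [map_add, map_mul, ha, hb] using (map_ne_zero σ).2 hu
  rw [map_cubicParam, ha, hb, cubicParam_eq_cubicParam_iff he hσu hu]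

lemma setOf_twisted_cubic_eq_twistedRoots {h e : F} (hh : σ h = h) (he : σ e = e) :
    {x : F | σ (σ (σ x)) = x ∧ σ (σ x) ^ 2 * x + h * x + e = 0} = twistedRoots σ h e := by
  ext x
  refine and_congr_right fun hx => ?_
  rw [← map_eq_zero σ]
  simp only [map_add, map_mul, map_pow, hx, hh, he, CharTwo.add_eq_zero]
  rw [mul_add, mul_comm (x ^ 2), mul_comm h]

/-! ### Roots of the cubic fixed by `σ` -/

lemma map_cubicParam_mul_eq_iff_of_fixed (ha : σ a = a) (hb : σ b = b)
    (he : a * b * (a + b) ≠ 0) {u : F} (hu : a + u * b ≠ 0) :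
    σ (cubicParam a b u) * (cubicParam a b u ^ 2 + (a ^ 2 + a * b + b ^ 2)) = a * b * (a + b) ↔
      σ u = u ^ 2 := by
  have hσu : a + σ u * b ≠ 0 := by
    simpa only [map_add, map_mul, ha, hb] using (map_ne_zero σ).2 hu
  have hdet : (a ^ 2 + σ u * b ^ 2) * (a + u ^ 2 * b) - (a ^ 2 + u ^ 2 * b ^ 2) * (a + σ u * b) =
      a * b * (a + b) * (σ u - u ^ 2) := by grind
  rw [mul_cubicParam_sq_add_eq_iff he hu, map_cubicParam, ha, hb, cubicParam, div_mul_eq_mul_div,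
    div_eq_iff hσu, ← sub_eq_zero, hdet, mul_eq_zero, or_iff_right he, sub_eq_zero]

lemma map_eq_self_of_mem_twistedRoots_of_fixed (ha : σ a = a) (hb : σ b = b)
    (he : a * b * (a + b) ≠ 0) (hσ : ∀ w : F, w ^ 3 + w + 1 = 0 → σ w ≠ w ^ 2) {x : F}
    (hx : x ∈ twistedRoots σ (a ^ 2 + a * b + b ^ 2) (a * b * (a + b))) : σ x = x := by
  obtain rfl | hxb := eq_or_ne x b
  · exact hb
  obtain ⟨u, hu, rfl⟩ := exists_cubicParam_eq he hxb
  rw [map_cubicParam_eq_self_iff ha hb he hu]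
  have hu2 : σ u = u ^ 2 := (map_cubicParam_mul_eq_iff_of_fixed ha hb he hu).1 hx.2
  have hu3 : σ (σ (σ u)) = u :=
    (map_cubicParam_eq_self_iff (σ := σ.comp (σ.comp σ)) (by simp [ha]) (by simp [hb]) he hu).1
      hx.1
  have hu8 : u ^ 8 = u := by simpa only [hu2, map_pow, ← pow_mul] using hu3
  rcases sq_eq_self_or_cubic_eq_zero_of_pow_eight_eq hu8 with hsq | hw | hw
  · rw [hu2, hsq]
  · exact absurd hu2 (hσ u hw)
  · refine absurd ?_ (hσ (u + 1) hw)
    rw [map_add, map_one, hu2, CharTwo.add_sq, one_pow]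

lemma twistedRoots_eq_depressed_cubic_roots_of_fixed (ha : σ a = a) (hb : σ b = b)
    (he : a * b * (a + b) ≠ 0) (hσ : ∀ w : F, w ^ 3 + w + 1 = 0 → σ w ≠ w ^ 2) :
    twistedRoots σ (a ^ 2 + a * b + b ^ 2) (a * b * (a + b)) =
      {x | x ^ 3 + (a ^ 2 + a * b + b ^ 2) * x + a * b * (a + b) = 0} := by
  have hmem_iff : ∀ x, σ x = x → (σ x * (x ^ 2 + (a ^ 2 + a * b + b ^ 2)) = a * b * (a + b) ↔
      x ^ 3 + (a ^ 2 + a * b + b ^ 2) * x + a * b * (a + b) = 0) := by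
    intro x hx
    rw [CharTwo.add_eq_zero, hx]
    ring_nf
  ext x
  constructor
  · intro hx
    exact (hmem_iff x (map_eq_self_of_mem_twistedRoots_of_fixed ha hb he hσ hx)).1 hx.2
  · intro hx
    have hσx : σ x = x := by
      rcases depressed_cubic_eq_zero_iff.1 hx with rfl | rfl | rfl
      · exact ha
      · exact hb
      · rw [map_add, ha, hb]
    exact ⟨by simp only [hσx], (hmem_iff x hσx).2 hx⟩

/-! ### Roots of the cubic permuted cyclically by `σ` -/

lemma map_cubicParam_mul_eq_iff_of_cycle (ha : σ a = b) (hb : σ b = a + b)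
    (he : a * b * (a + b) ≠ 0) {u : F} (hu : a + u * b ≠ 0) :
    σ (cubicParam a b u) * (cubicParam a b u ^ 2 + (a ^ 2 + a * b + b ^ 2)) = a * b * (a + b) ↔
      σ u * (u + 1) ^ 2 = 1 := by
  have hσu : b + σ u * (a + b) ≠ 0 := by
    simpa only [map_add, map_mul, ha, hb] using (map_ne_zero σ).2 hu
  have hdet : (b ^ 2 + σ u * (a + b) ^ 2) * (a + u ^ 2 * b) -
      (a ^ 2 + u ^ 2 * b ^ 2) * (b + σ u * (a + b)) =
        a * b * (a + b) * (σ u * (u + 1) ^ 2 - 1) := by grind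
  rw [mul_cubicParam_sq_add_eq_iff he hu, map_cubicParam, ha, hb, cubicParam, div_mul_eq_mul_div,
    div_eq_iff hσu, ← sub_eq_zero, hdet, mul_eq_zero, or_iff_right he, sub_eq_zero]

lemma cubicParam_mem_twistedRoots_iff_of_cycle (ha : σ a = b) (hb : σ b = a + b)
    (he : a * b * (a + b) ≠ 0) {u : F} (hu : a + u * b ≠ 0) :
    cubicParam a b u ∈ twistedRoots σ (a ^ 2 + a * b + b ^ 2) (a * b * (a + b)) ↔
      u ∈ cycleParams σ := by
  have ha3 : σ (σ (σ a)) = a := by rw [ha, hb, map_add, ha, hb]; grind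
  have hb3 : σ (σ (σ b)) = b := by rw [hb, map_add, ha, hb, map_add, map_add, ha, hb]; grind
  exact and_congr (map_cubicParam_eq_self_iff (σ := σ.comp (σ.comp σ)) ha3 hb3 he hu)
    (map_cubicParam_mul_eq_iff_of_cycle ha hb he hu)

lemma cubicResolvent_mul_cubicResolvent_add (a b : F) :
    cubicResolvent a b * (cubicResolvent a b + a * b * (a + b)) =
      (a ^ 2 + a * b + b ^ 2) ^ 3 + (a * b * (a + b)) ^ 2 := by
  unfold cubicResolvent
  grind

/-- The two factors on the left of `cubicResolvent_mul_cubicResolvent_add` are the values at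
`(a, b)` of the homogenized irreducible cubics over `F₂`. -/
lemma add_mul_ne_zero_of_mem_cycleParams
    (hne : (a ^ 2 + a * b + b ^ 2) ^ 3 ≠ (a * b * (a + b)) ^ 2) {u : F} (hu : u ∈ cycleParams σ) :
    a + u * b ≠ 0 := by
  intro hden
  obtain rfl : a = u * b := CharTwo.add_eq_zero.1 hden
  apply hne
  rw [← CharTwo.add_eq_zero, ← cubicResolvent_mul_cubicResolvent_add]
  rcases cubic_eq_zero_or_of_mem_cycleParams hu with hw | hw
  · have hfactor : cubicResolvent (u * b) b + u * b * b * (u * b + b) =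
        b ^ 3 * (u ^ 3 + u + 1) := by unfold cubicResolvent; grind
    rw [hfactor, hw, mul_zero, mul_zero]
  · have hfactor : cubicResolvent (u * b) b = b ^ 3 * ((u + 1) ^ 3 + (u + 1) + 1) := by
      unfold cubicResolvent; grind
    rw [hfactor, hw, mul_zero, zero_mul]

lemma twistedRoots_eq_image_cycleParams (ha : σ a = b) (hb : σ b = a + b)
    (he : a * b * (a + b) ≠ 0) (hne : (a ^ 2 + a * b + b ^ 2) ^ 3 ≠ (a * b * (a + b)) ^ 2) :
    twistedRoots σ (a ^ 2 + a * b + b ^ 2) (a * b * (a + b)) = cubicParam a b '' cycleParams σ := by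
  ext x
  constructor
  · intro hx
    have hxb : x ≠ b := by
      rintro rfl
      have hx2 := hx.2
      rw [hb] at hx2
      grind
    obtain ⟨u, hu, rfl⟩ := exists_cubicParam_eq he hxb
    exact ⟨u, (cubicParam_mem_twistedRoots_iff_of_cycle ha hb he hu).1 hx, rfl⟩
  · rintro ⟨u, hu, rfl⟩
    exact (cubicParam_mem_twistedRoots_iff_of_cycle ha hb he
      (add_mul_ne_zero_of_mem_cycleParams hne hu)).2 hu

lemma ncard_twistedRoots_eq_ncard_cycleParams (ha : σ a = b) (hb : σ b = a + b)
    (he : a * b * (a + b) ≠ 0) (hne : (a ^ 2 + a * b + b ^ 2) ^ 3 ≠ (a * b * (a + b)) ^ 2) :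
    (twistedRoots σ (a ^ 2 + a * b + b ^ 2) (a * b * (a + b))).ncard = (cycleParams σ).ncard := by
  rw [twistedRoots_eq_image_cycleParams ha hb he hne]
  refine Set.InjOn.ncard_image fun u hu v hv huv => ?_
  exact (cubicParam_eq_cubicParam_iff he (add_mul_ne_zero_of_mem_cycleParams hne hu)
    (add_mul_ne_zero_of_mem_cycleParams hne hv)).1 huv

/-! ### The action of `σ` on the roots of the cubic -/

lemma even_of_cubicResolvent_eq (he : a * b * (a + b) ≠ 0) {a' b' : F}
    (ha' : a' = a ∨ a' = b ∨ a' = a + b) (hb' : b' = a ∨ b' = b ∨ b' = a + b) (hne : a' ≠ b')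
    (hres : cubicResolvent a' b' = cubicResolvent a b) :
    (a' = a ∧ b' = b) ∨ (a' = b ∧ b' = a + b) ∨ (a' = a + b ∧ b' = a) := by
  unfold cubicResolvent at hres
  rcases ha' with rfl | rfl | rfl <;> rcases hb' with rfl | rfl | rfl <;> grind

lemma map_cubicResolvent_eq_self {d : F} (he : σ (a * b * (a + b)) = a * b * (a + b))
    (hd : σ d = d) (hdisc : (a ^ 2 + a * b + b ^ 2) ^ 3 + (a * b * (a + b)) ^ 2 =
      d * (d + a * b * (a + b))) :
    σ (cubicResolvent a b) = cubicResolvent a b := by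
  rw [← cubicResolvent_mul_cubicResolvent_add] at hdisc
  have hfactor : (cubicResolvent a b + d) * (cubicResolvent a b + (d + a * b * (a + b))) = 0 := by
    grind
  rcases mul_eq_zero.1 hfactor with hres | hres
  · rw [CharTwo.add_eq_zero.1 hres, hd]
  · rw [CharTwo.add_eq_zero.1 hres, map_add, hd, he]

lemma exists_roots_fixed_or_cycled [IsAlgClosed F] {h e d : F} (hh : σ h = h) (he : σ e = e)
    (hd : σ d = d) (he0 : e ≠ 0) (hdisc : h ^ 3 + e ^ 2 = d * (d + e)) :
    ∃ a b, h = a ^ 2 + a * b + b ^ 2 ∧ e = a * b * (a + b) ∧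
      ((σ a = a ∧ σ b = b) ∨ (σ a = b ∧ σ b = a + b)) := by
  obtain ⟨a, b, rfl, rfl⟩ := exists_depressed_cubic_roots (h := h) he0
  have hab : a ≠ b := by grind
  have hres : cubicResolvent (σ a) (σ b) = cubicResolvent a b := by
    rw [← map_cubicResolvent, map_cubicResolvent_eq_self he hd hdisc]
  have hperm : ∀ x, x = a ∨ x = b ∨ x = a + b → σ x = a ∨ σ x = b ∨ σ x = a + b := fun x hx =>
    depressed_cubic_eq_zero_iff.1
      (map_depressed_cubic_eq_zero hh he (depressed_cubic_eq_zero_iff.2 hx))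
  rcases even_of_cubicResolvent_eq he0 (hperm a (by simp)) (hperm b (by simp))
    (σ.injective.ne hab) hres with hfixed | hcycle | ⟨ha, hb⟩
  · exact ⟨a, b, rfl, rfl, Or.inl hfixed⟩
  · exact ⟨a, b, rfl, rfl, Or.inr hcycle⟩
  · exact ⟨a, a + b, by grind, by grind, Or.inr ⟨ha, by rw [map_add, ha, hb]; grind⟩⟩

end CharTwo

/-- The hypotheses on `d` say that the quadratic resolvent of `X³ + hX + e` has a root fixed by `σ`,
that is, `σ` permutes the roots of the cubic evenly; `hσ` says that `σ` is not the Frobenius on the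
subfield `F₈`. -/
theorem zheng_conjecture_general {F : Type*} [Field F] [CharP F 2] [IsAlgClosed F] (σ : F →+* F)
    {h e d : F} (hh : σ h = h) (he : σ e = e) (hd : σ d = d) (he0 : e ≠ 0) (hne : h ^ 3 ≠ e ^ 2)
    (hdisc : h ^ 3 + e ^ 2 = d * (d + e)) (hσ : ∀ w : F, w ^ 3 + w + 1 = 0 → σ w ≠ w ^ 2) :
    {x : F | σ (σ (σ x)) = x ∧ σ (σ x) ^ 2 * x + h * x + e = 0}.ncard = 3 := by
  rw [setOf_twisted_cubic_eq_twistedRoots hh he]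
  obtain ⟨a, b, rfl, rfl, ⟨ha, hb⟩ | ⟨ha, hb⟩⟩ := exists_roots_fixed_or_cycled hh he hd he0 hdisc
  · rw [twistedRoots_eq_depressed_cubic_roots_of_fixed ha hb he0 hσ,
      ncard_depressed_cubic_roots he0]
  · rw [ncard_twistedRoots_eq_ncard_cycleParams ha hb he0 hne, ncard_cycleParams hσ]

/-- Corollary 1.4: for `q = 2^m` with `m ≢ 1 (mod 3)` and `h, e ∈ F_q \ F_2` with
`h³ = e² + e + 1`, the polynomial `X^(2q²+1) + hX + e` has exactly three roots in `F_{q³}`. -/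
theorem zheng_conjecture
    (m : ℕ) (hm : 0 < m) (hm3 : ¬ m % 3 = 1)
    (q : ℕ) (hq : q = 2 ^ m)
    (h e : K) (hhq : h ^ q = h) (hh2 : h ^ 2 ≠ h)
    (heq : e ^ q = e) (he2 : e ^ 2 ≠ e)
    (hcube : h ^ 3 = e ^ 2 + e + 1) :
    {x : K | x ^ q ^ 3 = x ∧ x ^ (2 * q ^ 2 + 1) + h * x + e = 0}.ncard = 3 := by
  have hfrob : ∀ x, iterateFrobenius K 2 m x = x ^ q := fun x => by rw [hq, iterateFrobenius_def]
  have he0 : e ≠ 0 := by grind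
  have hne : h ^ 3 ≠ e ^ 2 := by grind
  have hdisc : h ^ 3 + e ^ 2 = 1 * (1 + e) := by grind
  have hcount := zheng_conjecture_general (iterateFrobenius K 2 m) ((hfrob h).trans hhq)
    ((hfrob e).trans heq) (map_one _) he0 hne hdisc
    fun w hw => pow_two_pow_ne_sq_of_cubic_eq_zero hw hm3
  simpa only [hfrob, ← pow_mul, ← pow_succ, pow_three', sq q, mul_comm 2] using hcount
end

section
/- The set Γ of roots in F_{q³} of X^(2q²+1) + hX + e has exactly three elements, and Γ is contained in F_q if and only if 1 + ωe is a cube in F_{q²}. If Γ is not contained in F_q, then Γ is contained in F_{q³} \ F_q, and Γ is the set of roots of X³ + h²X² + (e+1)hX + 1 if (e+ω)^((q²−1)/3) = ω, while Γ is the set of roots of (e+1)X³ + h²X² + hX + e² + 1 if (e+ω)^((q²−1)/3) ≠ ω. -/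
open Polynomial

local notation "K" => AlgebraicClosure (ZMod 2)

/-!
A root `x ∈ F_{q³}` satisfies `x ^ q = e / (x² + h)`, so `x`, `x ^ q`, `x ^ q²` is a cycle of the
map `x ↦ e / (x² + h)`. Choose `u³ = 1 + ωe` and `v³ = 1 + ω²e` with `uv = h`. The Möbius map
`N(s) = (u²s + v²) / (vs + u)` conjugates `s ↦ s⁻²` to this map, so its cycles of length dividing
three are made of the points `N(s)` with `s⁹ = 1`.

The `q`-th power map multiplies `u` and `v` by inverse cube roots of unity, interchanging them as
well if `q ≡ 2` modulo `3`. The condition `N(s) ^ q = N(s⁻²)` thereby becomes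
`s ^ (2q² + 1) = u ^ (q² - 1)`. Writing `q² = 3n + 1`, it says `s ^ (3(2n + 1)) = κ`, where
`κ = (1 + ωe) ^ n` is the cubic character of `1 + ωe`. As `m ≢ 1` modulo `3`, the exponent
`2n + 1` is its own inverse modulo `3`, and the condition reads `s³ = τ` with `τ = κ ^ (2n + 1)`.
So `Γ` consists of the images of the three cube roots of `τ`, which are fixed by the `q`-th power
map exactly when `τ = 1`, and eliminating `s` for `τ = ω²` and `τ = ω` gives the two cubics.
-/

lemma pow_eq_iff_eq_pow_of_sq_modEq_one {M : Type*} [Monoid M] {N k : ℕ} {a b : M}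
    (hk : k ^ 2 ≡ 1 [MOD N]) (ha : a ^ N = 1) (hb : b ^ N = 1) : a ^ k = b ↔ a = b ^ k := by
  have pow_pow_self {c : M} (hc : c ^ N = 1) : (c ^ k) ^ k = c := by
    rw [← pow_mul, ← sq, pow_eq_pow_of_modEq hk hc, pow_one]
  constructor
  · rintro rfl
    exact (pow_pow_self ha).symm
  · rintro rfl
    exact pow_pow_self hb

lemma inv_pow_pow_eq_one {G : Type*} [DivisionMonoid G] {a : G} {n : ℕ} (k : ℕ)
    (ha : a ^ n = 1) : (a ^ k)⁻¹ ^ n = 1 := by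
  rw [inv_pow, pow_right_comm, ha, one_pow, inv_one]

lemma two_mul_add_one_sq_modEq_one {n : ℕ} (hn : n % 3 ≠ 1) : (2 * n + 1) ^ 2 ≡ 1 [MOD 3] := by
  have hmod : (2 * n + 1) % 3 = 1 ∨ (2 * n + 1) % 3 = 2 := by omega
  rcases hmod with hmod | hmod <;> rw [Nat.ModEq, Nat.pow_mod, hmod]

lemma exists_two_pow_sq_eq_three_mul_add_one {m : ℕ} (hm : m % 3 ≠ 1) :
    ∃ n, (2 ^ m) ^ 2 = 3 * n + 1 ∧ n % 3 ≠ 1 := by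
  have four_pow_mod_nine : (2 ^ m) ^ 2 % 9 = 4 ^ (m % 3) % 9 := by
    conv_lhs =>
      rw [← Nat.div_add_mod m 3, pow_right_comm, pow_add, pow_mul, Nat.mul_mod, Nat.pow_mod]
    norm_num
  have hm' : m % 3 = 0 ∨ m % 3 = 2 := by omega
  refine ⟨(2 ^ m) ^ 2 / 3, ?_⟩
  rcases hm' with hm' | hm' <;> rw [hm'] at four_pow_mod_nine <;> omega

lemma isPrimitiveRoot_three_of_pow_four_eq {R : Type*} [CommRing R] [IsDomain R] {ω : R}
    (hω4 : ω ^ 4 = ω) (hω2 : ω ^ 2 ≠ ω) : IsPrimitiveRoot ω 3 := by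
  have hω0 : ω ≠ 0 := by rintro rfl; simp at hω2
  have hω1 : ω ≠ 1 := by rintro rfl; simp at hω2
  have hω3 : ω ^ 3 = 1 := mul_right_cancel₀ hω0 (by rw [← pow_succ, hω4, one_mul])
  exact IsPrimitiveRoot.iff_orderOf.mpr (orderOf_eq_prime hω3 hω1)

lemma sq_add_self_add_one_of_isPrimitiveRoot_three {R : Type*} [CommRing R] [IsDomain R] {ω : R}
    (hω : IsPrimitiveRoot ω 3) : ω ^ 2 + ω + 1 = 0 := by
  have hsum := hω.geom_sum_eq_zero (by norm_num)
  rw [Finset.sum_range_succ, Finset.sum_range_succ, Finset.sum_range_one] at hsum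
  linear_combination hsum

section Field

variable {F : Type*} [Field F]

lemma exists_pow_mul_add_one_eq_self_and_pow_eq_iff [IsAlgClosed F] {d n : ℕ} {c : F}
    (hd : 0 < d) (hc : c ≠ 0) : (∃ y : F, y ^ (d * n + 1) = y ∧ y ^ d = c) ↔ c ^ n = 1 := by
  constructor
  · rintro ⟨y, hy, rfl⟩
    have hy0 : y ≠ 0 := (pow_ne_zero_iff hd.ne').mp hc
    rw [← pow_mul]
    exact mul_right_cancel₀ hy0 (by rw [← pow_succ, hy, one_mul])
  · intro hcn
    obtain ⟨y, rfl⟩ := IsAlgClosed.exists_pow_nat_eq c hd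
    exact ⟨y, by rw [pow_succ, pow_mul, hcn, one_mul], rfl⟩

lemma ncard_setOf_pow_eq_of_isPrimitiveRoot [IsAlgClosed F] {n : ℕ} {ζ a : F}
    (hζ : IsPrimitiveRoot ζ n) (hn : 0 < n) (ha : a ≠ 0) : {s : F | s ^ n = a}.ncard = n := by
  classical
  have coe_nthRoots : {s : F | s ^ n = a} = ((nthRoots n a).toFinset : Set F) := by
    ext s
    simp [mem_nthRoots hn]
  rw [coe_nthRoots, Set.ncard_coe_finset, Multiset.toFinset_card_of_nodup (hζ.nthRoots_nodup ha),
    hζ.card_nthRoots, if_pos (IsAlgClosed.exists_pow_nat_eq a hn)]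

lemma exists_pow_eq_one_mul_and_inv_mul {n : ℕ} {a b c d : F} (hn : n ≠ 0)
    (hpow : a ^ n = c ^ n) (hprod : a * b = c * d) (hc : c ≠ 0) :
    ∃ ρ : F, ρ ^ n = 1 ∧ a = ρ * c ∧ b = ρ⁻¹ * d := by
  have ha : a ≠ 0 := (pow_ne_zero_iff hn).mp (hpow ▸ pow_ne_zero n hc)
  refine ⟨a / c, ?_, by field_simp, ?_⟩
  · rw [div_pow, hpow, div_self (pow_ne_zero n hc)]
  · field_simp
    rw [mul_comm b, hprod]

/-- The Möbius map `s ↦ (u²s + v²) / (vs + u)`. In characteristic two it conjugates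
`s ↦ s⁻²` to `x ↦ (u³ + v³) / (x² + uv)`. -/
def mobius (u v s : F) : F := (u ^ 2 * s + v ^ 2) / (v * s + u)

/-- `y` is the image of `x` under `x ↦ e / (x² + h)` (in characteristic two), written without
division. -/
def IsStep (h e x y : F) : Prop := x ^ 2 * y + h * y + e = 0

/-- The roots of `X ^ (2q² + 1) + hX + e` in the subfield with `q³` elements, when `q` is a power
of the characteristic. The set called `Γ` in the paper. -/
def zhengRoots (q : ℕ) (h e : F) : Set F :=
  {x | x ^ q ^ 3 = x ∧ x ^ (2 * q ^ 2 + 1) + h * x + e = 0}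

/-- `u` and `v` are cube roots of `1 + ωe` and `1 + ω²e` with product `h`. Then `u³ + v³ = e`, so
this is the pair occurring in Cardano's formula for `X³ + hX + e`. -/
structure IsCardanoPair (ω h e u v : F) : Prop where
  cube_left : u ^ 3 = 1 + ω * e
  cube_right : v ^ 3 = 1 + ω ^ 2 * e
  mul_eq : u * v = h

lemma IsCardanoPair.pow_sq_eq {ω h e u v : F} {q n : ℕ}
    (huv : IsCardanoPair ω h e u v) (hn : q ^ 2 = 3 * n + 1) :
    u ^ q ^ 2 = (1 + ω * e) ^ n * u := by
  rw [hn, pow_succ, pow_mul, huv.cube_left]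

lemma IsCardanoPair.one_add_mul_ne_zero {ω h e u v : F} (huv : IsCardanoPair ω h e u v)
    (hh0 : h ≠ 0) : 1 + ω * e ≠ 0 := by
  rw [← huv.cube_left]
  exact pow_ne_zero 3 (left_ne_zero_of_mul (huv.mul_eq ▸ hh0))

lemma mobius_swap (u v : F) {s : F} (hs : s ≠ 0) : mobius v u s = mobius u v s⁻¹ := by
  rw [mobius, mobius, ← mul_div_mul_right (u ^ 2 * s⁻¹ + v ^ 2) _ hs]
  congr 1 <;> field_simp <;> ring

lemma mobius_twist {ρ : F} (hρ : ρ ^ 3 = 1) (u v s : F) :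
    mobius (ρ * u) (ρ⁻¹ * v) s = mobius u v (ρ * s) := by
  have hρ0 : ρ ≠ 0 := by rintro rfl; simp at hρ
  have hinv : ρ⁻¹ = ρ ^ 2 := inv_eq_of_mul_eq_one_right (by rw [← pow_succ', hρ])
  rw [mobius, mobius, hinv, ← mul_div_mul_left (u ^ 2 * (ρ * s) + v ^ 2) _ hρ0]
  congr 1
  · linear_combination ρ * v ^ 2 * hρ
  · ring

lemma IsStep.swap {u v x y : F} (hxy : IsStep (u * v) (u ^ 3 + v ^ 3) x y) :
    IsStep (v * u) (v ^ 3 + u ^ 3) x y := by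
  rwa [mul_comm v u, add_comm]

section ExpChar

variable {p m q : ℕ} [ExpChar F p] {h e x y : F}

lemma mobius_pow (hq : q = p ^ m) (u v s : F) :
    mobius u v s ^ q = mobius (u ^ q) (v ^ q) (s ^ q) := by
  subst hq
  simp only [mobius, div_pow, add_pow_expChar_pow, mul_pow, pow_right_comm _ 2 (p ^ m)]

lemma IsStep.pow (hq : q = p ^ m) (hh : h ^ q = h) (he : e ^ q = e) (hxy : IsStep h e x y) :
    IsStep h e (x ^ q) (y ^ q) := by
  have hq0 : q ≠ 0 := hq ▸ (expChar_pow_pos F p m).ne'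
  calc (x ^ q) ^ 2 * y ^ q + h * y ^ q + e
      = (x ^ 2 * y + h * y + e) ^ q := by
        subst hq
        simp only [add_pow_expChar_pow, mul_pow, hh, he, pow_right_comm _ 2 (p ^ m)]
    _ = 0 := by rw [hxy, zero_pow hq0]

lemma mem_zhengRoots_iff (hq : q = p ^ m) (hh : h ^ q = h) (he : e ^ q = e) :
    x ∈ zhengRoots q h e ↔ x ^ q ^ 3 = x ∧ IsStep h e x (x ^ q) := by
  have isStep_pow_sq : IsStep h e (x ^ q ^ 2) x ↔ x ^ (2 * q ^ 2 + 1) + h * x + e = 0 := by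
    rw [IsStep, ← pow_mul, pow_succ x, mul_comm (q ^ 2)]
  rw [zhengRoots, Set.mem_ofPred_eq, ← isStep_pow_sq]
  refine and_congr_right fun hx => ⟨fun hstep => ?_, fun hstep => ?_⟩
  · simpa only [← pow_mul, ← pow_succ, hx] using hstep.pow hq hh he
  · simpa only [← pow_mul, ← pow_succ, ← sq, hx] using (hstep.pow hq hh he).pow hq hh he

end ExpChar

variable [CharP F 2] {u v h e s x y z : F}

lemma cube_add_cube_ne_zero (hne : u ^ 9 ≠ v ^ 9) : u ^ 3 + v ^ 3 ≠ 0 := by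
  intro h0
  apply hne
  rw [pow_mul u 3 3, pow_mul v 3 3, CharTwo.add_eq_zero.mp h0]

lemma mobius_denom_ne_zero (hne : u ^ 9 ≠ v ^ 9) (hs : s ^ 9 = 1) : v * s + u ≠ 0 := by
  intro h0
  apply hne
  rw [← CharTwo.add_eq_zero.mp h0, mul_pow, hs, mul_one]

lemma mobius_injOn (hne : u ^ 9 ≠ v ^ 9) : Set.InjOn (mobius u v) {s | s ^ 9 = 1} := by
  intro s hs t ht hst
  rw [mobius, mobius, div_eq_div_iff (mobius_denom_ne_zero hne hs)
    (mobius_denom_ne_zero hne ht)] at hst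
  exact mul_left_cancel₀ (cube_add_cube_ne_zero hne) (by grind)

lemma mobius_inv_sq_eq_self_iff (hne : u ^ 9 ≠ v ^ 9) (hs : s ^ 9 = 1) :
    mobius u v (s ^ 2)⁻¹ = mobius u v s ↔ s ^ 3 = 1 := by
  have hs0 : s ≠ 0 := by rintro rfl; simp at hs
  rw [(mobius_injOn hne).eq_iff (inv_pow_pow_eq_one 2 hs) hs, eq_comm,
    ← mul_eq_one_iff_eq_inv₀ (pow_ne_zero 2 hs0), ← pow_succ']

lemma ncard_mobius_image_cube_eq [IsAlgClosed F] {ω τ : F} (hω : IsPrimitiveRoot ω 3)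
    (hne : u ^ 9 ≠ v ^ 9) (hτ : τ ^ 3 = 1) : (mobius u v '' {s | s ^ 3 = τ}).ncard = 3 := by
  have hτ0 : τ ≠ 0 := by rintro rfl; simp at hτ
  have hsub : {s | s ^ 3 = τ} ⊆ {s : F | s ^ 9 = 1} := by
    rintro s rfl
    rwa [← pow_mul] at hτ
  rw [((mobius_injOn hne).mono hsub).ncard_image,
    ncard_setOf_pow_eq_of_isPrimitiveRoot hω three_pos hτ0]

lemma mobius_div_eq_self (hne : u ^ 3 + v ^ 3 ≠ 0) (hx : v * x + u ^ 2 ≠ 0) :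
    mobius u v ((u * x + v ^ 2) / (v * x + u ^ 2)) = x := by
  have hdenom : v * ((u * x + v ^ 2) / (v * x + u ^ 2)) + u =
      (u ^ 3 + v ^ 3) / (v * x + u ^ 2) := by
    field_simp
    grind
  rw [mobius, hdenom]
  field_simp
  grind

lemma mul_mobius_add_sq (hs : v * s + u ≠ 0) :
    u * mobius u v s + v ^ 2 = s * (v * mobius u v s + u ^ 2) := by
  rw [mobius]
  field_simp
  grind

lemma mem_mobius_image_cube_eq_iff {τ : F} (hne : u ^ 9 ≠ v ^ 9) (hτ : τ ^ 3 = 1) :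
    x ∈ mobius u v '' {s | s ^ 3 = τ} ↔ (u * x + v ^ 2) ^ 3 = τ * (v * x + u ^ 2) ^ 3 := by
  constructor
  · rintro ⟨s, rfl, rfl⟩
    have hs : s ^ 9 = 1 := by rw [pow_mul s 3 3, hτ]
    rw [mul_mobius_add_sq (mobius_denom_ne_zero hne hs), mul_pow]
  · intro hx
    have hdenom : v * x + u ^ 2 ≠ 0 := by
      intro h0
      have hnum : u * x + v ^ 2 = 0 := by simpa [h0] using hx
      exact cube_add_cube_ne_zero hne (by grind)
    refine ⟨_, ?_, mobius_div_eq_self (cube_add_cube_ne_zero hne) hdenom⟩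
    rw [Set.mem_ofPred_eq, div_pow, hx, mul_div_cancel_right₀ _ (pow_ne_zero 3 hdenom)]

lemma isStep_mobius_iff (hne : u ^ 9 ≠ v ^ 9) (hs : s ^ 9 = 1) :
    IsStep (u * v) (u ^ 3 + v ^ 3) (mobius u v s) y ↔ y = mobius u v (s ^ 2)⁻¹ := by
  have hs0 : s ≠ 0 := by rintro rfl; simp at hs
  have hdenom : v * s + u ≠ 0 := mobius_denom_ne_zero hne hs
  have hdenom_sq : u * s ^ 2 + v ≠ 0 :=
    mobius_denom_ne_zero hne.symm (by rw [pow_right_comm, hs, one_pow])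
  have himage : mobius u v (s ^ 2)⁻¹ = (v * s + u) ^ 2 / (u * s ^ 2 + v) := by
    rw [← mobius_swap u v (pow_ne_zero 2 hs0), mobius, CharTwo.add_sq, mul_pow]
  have hsq : mobius u v s ^ 2 + u * v =
      (u ^ 3 + v ^ 3) * (u * s ^ 2 + v) / (v * s + u) ^ 2 := by
    rw [mobius, div_pow, div_add' _ _ _ (pow_ne_zero 2 hdenom)]
    congr 1
    grind
  rw [IsStep, ← add_mul, hsq, himage, CharTwo.add_eq_zero, eq_div_iff hdenom_sq,
    div_mul_eq_mul_div, div_eq_iff (pow_ne_zero 2 hdenom), mul_assoc,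
    mul_right_inj' (cube_add_cube_ne_zero hne), mul_comm]

lemma IsStep.mul_add_sq (hxy : IsStep (u * v) (u ^ 3 + v ^ 3) x y) :
    (u * y + v ^ 2) * (x ^ 2 + u * v) = (v * x + u ^ 2) ^ 2 := by
  unfold IsStep at hxy
  grind

lemma mul_add_sq_mul_eq_pow_eight_of_isStep (hxy : IsStep (u * v) (u ^ 3 + v ^ 3) x y)
    (hyz : IsStep (u * v) (u ^ 3 + v ^ 3) y z) (hzx : IsStep (u * v) (u ^ 3 + v ^ 3) z x) :
    (u * x + v ^ 2) * ((z ^ 2 + u * v) * (y ^ 2 + u * v) ^ 2 * (x ^ 2 + u * v) ^ 4) =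
      (v * x + u ^ 2) ^ 8 := by
  have hyz' : (v * z + u ^ 2) * (y ^ 2 + u * v) = (u * y + v ^ 2) ^ 2 := by
    rw [mul_comm u v]
    exact hyz.swap.mul_add_sq
  calc
    _ = (u * x + v ^ 2) * (z ^ 2 + u * v) * (y ^ 2 + u * v) ^ 2 * (x ^ 2 + u * v) ^ 4 := by ring
    _ = ((v * z + u ^ 2) * (y ^ 2 + u * v)) ^ 2 * (x ^ 2 + u * v) ^ 4 := by
      rw [hzx.mul_add_sq]; ring
    _ = ((u * y + v ^ 2) * (x ^ 2 + u * v)) ^ 4 := by rw [hyz']; ring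
    _ = (v * x + u ^ 2) ^ 8 := by rw [hxy.mul_add_sq]; ring

lemma exists_mobius_eq_of_isStep_cycle (hne : u ^ 3 + v ^ 3 ≠ 0)
    (hxy : IsStep (u * v) (u ^ 3 + v ^ 3) x y) (hyz : IsStep (u * v) (u ^ 3 + v ^ 3) y z)
    (hzx : IsStep (u * v) (u ^ 3 + v ^ 3) z x) : ∃ s, s ^ 9 = 1 ∧ mobius u v s = x := by
  have hnum := mul_add_sq_mul_eq_pow_eight_of_isStep hxy hyz hzx
  have hdenom := mul_add_sq_mul_eq_pow_eight_of_isStep hxy.swap hyz.swap hzx.swap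
  rw [mul_comm v u] at hdenom
  have hpow : (u * x + v ^ 2) ^ 9 = (v * x + u ^ 2) ^ 9 := by
    linear_combination (v * x + u ^ 2) * hnum - (u * x + v ^ 2) * hdenom
  have hdenom0 : v * x + u ^ 2 ≠ 0 := by
    intro h0
    have hnum0 : u * x + v ^ 2 = 0 := by simpa [h0] using hpow
    exact hne (by grind)
  refine ⟨_, ?_, mobius_div_eq_self hne hdenom0⟩
  rw [div_pow, hpow, div_self (pow_ne_zero 9 hdenom0)]

section Frobenius

variable {q m : ℕ}

lemma zhengRoots_eq_mobius_image (hq : q = 2 ^ m) (hh : (u * v) ^ q = u * v)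
    (he : (u ^ 3 + v ^ 3) ^ q = u ^ 3 + v ^ 3) (hne : u ^ 9 ≠ v ^ 9) :
    zhengRoots q (u * v) (u ^ 3 + v ^ 3) =
      mobius u v '' {s | s ^ 9 = 1 ∧ mobius u v s ^ q = mobius u v (s ^ 2)⁻¹} := by
  ext x
  rw [mem_zhengRoots_iff hq hh he]
  constructor
  · rintro ⟨hx, hstep⟩
    have hstep' := hstep.pow hq hh he
    have hstep'' := hstep'.pow hq hh he
    simp only [← pow_mul, ← sq, ← pow_succ, hx] at hstep' hstep''
    obtain ⟨s, hs, rfl⟩ :=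
      exists_mobius_eq_of_isStep_cycle (cube_add_cube_ne_zero hne) hstep hstep' hstep''
    exact ⟨s, ⟨hs, (isStep_mobius_iff hne hs).mp hstep⟩, rfl⟩
  · rintro ⟨s, ⟨hs, hsq⟩, rfl⟩
    have hstep := (isStep_mobius_iff hne hs).mpr hsq
    have hs' := inv_pow_pow_eq_one 2 hs
    have hstep' := hstep.pow hq hh he
    rw [hsq, isStep_mobius_iff hne hs'] at hstep'
    have hstep'' := (hstep.pow hq hh he).pow hq hh he
    rw [hsq, hstep', isStep_mobius_iff hne (inv_pow_pow_eq_one 2 hs')] at hstep''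
    have inv_sq_iterate : ((((s ^ 2)⁻¹ ^ 2)⁻¹ ^ 2)⁻¹) = s := by
      simp only [inv_pow, inv_inv, ← pow_mul]
      exact inv_eq_of_mul_eq_one_left (by rw [← pow_succ', hs])
    refine ⟨?_, hstep⟩
    rw [pow_succ, pow_mul, sq, pow_mul, hsq, hstep', hstep'', inv_sq_iterate]

lemma mobius_pow_eq_iff_of_mod_three_eq_one {ρ : F} (hq : q = 2 ^ m) (hq3 : q % 3 = 1)
    (hρ : ρ ^ 3 = 1) (hu : u ^ q = ρ * u) (hv : v ^ q = ρ⁻¹ * v) (hu0 : u ≠ 0)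
    (hne : u ^ 9 ≠ v ^ 9) (hs : s ^ 9 = 1) :
    mobius u v s ^ q = mobius u v (s ^ 2)⁻¹ ↔ s ^ (2 * q ^ 2 + 1) * u = u ^ q ^ 2 := by
  have hρ0 : ρ ≠ 0 := by rintro rfl; simp at hρ
  have hs0 : s ≠ 0 := by rintro rfl; simp at hs
  have hmod : 2 * q ^ 2 + 1 ≡ q + 2 [MOD 9] := by
    obtain ⟨j, hj⟩ : ∃ j, q = 3 * j + 1 := ⟨q / 3, by omega⟩
    rw [show 2 * q ^ 2 + 1 = q + 2 + 9 * (2 * j ^ 2 + j) by rw [hj]; ring]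
    exact Nat.add_mul_mod_self_left ..
  have hu_sq : u ^ q ^ 2 = ρ⁻¹ * u := by
    have hρq : ρ ^ q = ρ := by
      rw [pow_eq_pow_of_modEq (show q ≡ 1 [MOD 3] from hq3) hρ, pow_one]
    rw [sq, pow_mul, hu, mul_pow, hρq, hu, ← mul_assoc]
    congr 1
    exact eq_inv_of_mul_eq_one_left (by rw [← sq, ← pow_succ, hρ])
  have hρs : (ρ * s ^ q) ^ 9 = 1 := by
    rw [mul_pow, pow_right_comm, hs, one_pow, mul_one, pow_mul ρ 3 3, hρ, one_pow]
  rw [mobius_pow hq, hu, hv, mobius_twist hρ,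
    (mobius_injOn hne).eq_iff hρs (inv_pow_pow_eq_one 2 hs), hu_sq, mul_left_inj' hu0,
    pow_eq_pow_of_modEq hmod hs, pow_add, ← mul_eq_one_iff_eq_inv₀ (pow_ne_zero 2 hs0),
    ← mul_eq_one_iff_eq_inv₀ hρ0, mul_assoc, mul_comm ρ]

lemma mobius_pow_eq_iff_of_mod_three_eq_two {ρ : F} (hq : q = 2 ^ m) (hq3 : q % 3 = 2)
    (hρ : ρ ^ 3 = 1) (hu : u ^ q = ρ * v) (hv : v ^ q = ρ⁻¹ * u) (hu0 : u ≠ 0)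
    (hne : u ^ 9 ≠ v ^ 9) (hs : s ^ 9 = 1) :
    mobius u v s ^ q = mobius u v (s ^ 2)⁻¹ ↔ s ^ (2 * q ^ 2 + 1) * u = u ^ q ^ 2 := by
  have hρ0 : ρ ≠ 0 := by rintro rfl; simp at hρ
  have hs0 : s ≠ 0 := by rintro rfl; simp at hs
  have hmod : 2 * q ^ 2 + 1 + q ≡ 2 [MOD 9] := by
    obtain ⟨j, hj⟩ : ∃ j, q = 3 * j + 2 := ⟨q / 3, by omega⟩
    rw [show 2 * q ^ 2 + 1 + q = 2 + 9 * (2 * j ^ 2 + 3 * j + 1) by rw [hj]; ring]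
    exact Nat.add_mul_mod_self_left ..
  have hu_sq : u ^ q ^ 2 = ρ * u := by
    have hρq : ρ ^ q = ρ ^ 2 := pow_eq_pow_of_modEq (show q ≡ 2 [MOD 3] from hq3) hρ
    rw [sq, pow_mul, hu, mul_pow, hρq, hv, ← mul_assoc, sq, mul_inv_cancel_right₀ hρ0]
  have hρs : (ρ * s ^ q)⁻¹ ^ 9 = 1 := by
    rw [inv_pow, mul_pow, pow_right_comm, hs, one_pow, mul_one, pow_mul ρ 3 3, hρ, one_pow,
      inv_one]
  rw [mobius_pow hq, hu, hv, mobius_twist hρ, mobius_swap u v (mul_ne_zero hρ0 (pow_ne_zero q hs0)),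
    (mobius_injOn hne).eq_iff hρs (inv_pow_pow_eq_one 2 hs), inv_inj, hu_sq, mul_left_inj' hu0,
    ← pow_eq_pow_of_modEq hmod hs, pow_add, mul_left_inj' (pow_ne_zero q hs0), eq_comm]

end Frobenius

section CardanoPair

variable {q m n : ℕ} {ω : F}

lemma exists_isCardanoPair [IsAlgClosed F] (hω : IsPrimitiveRoot ω 3) (hh0 : h ≠ 0)
    (hcube : h ^ 3 = e ^ 2 + e + 1) : ∃ u v, IsCardanoPair ω h e u v := by
  have hω' := sq_add_self_add_one_of_isPrimitiveRoot_three hω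
  obtain ⟨u, hu⟩ := IsAlgClosed.exists_pow_nat_eq (1 + ω * e) (n := 3) (by norm_num)
  have hprod : h ^ 3 = u ^ 3 * (1 + ω ^ 2 * e) := by
    rw [hu, hcube]
    clear * - hω'
    grind
  have hu0 : u ≠ 0 := by
    rintro rfl
    exact hh0 (by simpa using hprod)
  refine ⟨u, h / u, hu, ?_, mul_div_cancel₀ h hu0⟩
  rw [div_pow, hprod, mul_div_cancel_left₀ _ (pow_ne_zero 3 hu0)]

namespace IsCardanoPair

lemma cube_add_cube (huv : IsCardanoPair ω h e u v) (hω : IsPrimitiveRoot ω 3) :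
    u ^ 3 + v ^ 3 = e := by
  have hω' := sq_add_self_add_one_of_isPrimitiveRoot_three hω
  rw [huv.cube_left, huv.cube_right]
  clear * - hω'
  grind

lemma pow_nine_ne (huv : IsCardanoPair ω h e u v) (hω : IsPrimitiveRoot ω 3)
    (he : e ^ 2 ≠ e) : u ^ 9 ≠ v ^ 9 := by
  have hω' := sq_add_self_add_one_of_isPrimitiveRoot_three hω
  intro heq
  rw [pow_mul u 3 3, pow_mul v 3 3, huv.cube_left, huv.cube_right] at heq
  apply he
  clear * - hω' heq
  grind

lemma mobius_pow_eq_iff (huv : IsCardanoPair ω h e u v) (hω : IsPrimitiveRoot ω 3)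
    (hq : q = 2 ^ m) (hh : h ^ q = h) (hh0 : h ≠ 0) (he : e ^ q = e) (he2 : e ^ 2 ≠ e)
    (hs : s ^ 9 = 1) :
    mobius u v s ^ q = mobius u v (s ^ 2)⁻¹ ↔ s ^ (2 * q ^ 2 + 1) * u = u ^ q ^ 2 := by
  have hne := huv.pow_nine_ne hω he2
  obtain ⟨hu0, hv0⟩ : u ≠ 0 ∧ v ≠ 0 := mul_ne_zero_iff.mp (huv.mul_eq ▸ hh0)
  have hprod : u ^ q * v ^ q = u * v := by rw [← mul_pow, huv.mul_eq, hh]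
  have hcube : (u ^ q) ^ 3 = 1 + ω ^ q * e := by
    rw [pow_right_comm, huv.cube_left, hq, add_pow_expChar_pow, one_pow, mul_pow, ← hq, he]
  have hq3 : q % 3 = 1 ∨ q % 3 = 2 := by
    have hndvd : ¬ 3 ∣ q := fun hdvd =>
      absurd (Nat.prime_three.dvd_of_dvd_pow (hq ▸ hdvd)) (by norm_num)
    omega
  rcases hq3 with hq3 | hq3
  · rw [pow_eq_pow_of_modEq (show q ≡ 1 [MOD 3] from hq3) hω.pow_eq_one, pow_one,
      ← huv.cube_left] at hcube
    obtain ⟨ρ, hρ, hu, hv⟩ := exists_pow_eq_one_mul_and_inv_mul three_ne_zero hcube hprod hu0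
    exact mobius_pow_eq_iff_of_mod_three_eq_one hq hq3 hρ hu hv hu0 hne hs
  · rw [pow_eq_pow_of_modEq (show q ≡ 2 [MOD 3] from hq3) hω.pow_eq_one,
      ← huv.cube_right] at hcube
    rw [mul_comm u v] at hprod
    obtain ⟨ρ, hρ, hu, hv⟩ := exists_pow_eq_one_mul_and_inv_mul three_ne_zero hcube hprod hv0
    exact mobius_pow_eq_iff_of_mod_three_eq_two hq hq3 hρ hu hv hu0 hne hs

lemma one_add_mul_pow_cube (huv : IsCardanoPair ω h e u v) (hω : IsPrimitiveRoot ω 3)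
    (hq : q = 2 ^ m) (hn : q ^ 2 = 3 * n + 1) (hh0 : h ≠ 0) (he : e ^ q = e) :
    ((1 + ω * e) ^ n) ^ 3 = 1 := by
  have hωq : ω ^ q ^ 2 = ω := by rw [hn, pow_succ, pow_mul, hω.pow_eq_one, one_pow, one_mul]
  have heq : e ^ q ^ 2 = e := by rw [sq, pow_mul, he, he]
  have hpow : (1 + ω * e) ^ q ^ 2 = 1 + ω * e := by
    rw [hq, ← pow_mul, add_pow_expChar_pow, one_pow, mul_pow, pow_mul, ← hq, hωq, heq]
  apply mul_right_cancel₀ (huv.one_add_mul_ne_zero hh0)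
  rw [← pow_mul, mul_comm n, ← pow_succ, ← hn, hpow, one_mul]

lemma one_add_mul_pow_pow_cube (huv : IsCardanoPair ω h e u v) (hω : IsPrimitiveRoot ω 3)
    (hq : q = 2 ^ m) (hn : q ^ 2 = 3 * n + 1) (hh0 : h ≠ 0) (he : e ^ q = e) :
    (((1 + ω * e) ^ n) ^ (2 * n + 1)) ^ 3 = 1 := by
  rw [pow_right_comm, huv.one_add_mul_pow_cube hω hq hn hh0 he, one_pow]

lemma one_add_mul_pow_eq_one_iff (huv : IsCardanoPair ω h e u v) (hω : IsPrimitiveRoot ω 3)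
    (hq : q = 2 ^ m) (hn : q ^ 2 = 3 * n + 1) (hn3 : n % 3 ≠ 1) (hh0 : h ≠ 0) (he : e ^ q = e) :
    ((1 + ω * e) ^ n) ^ (2 * n + 1) = 1 ↔ (1 + ω * e) ^ n = 1 := by
  rw [pow_eq_iff_eq_pow_of_sq_modEq_one (two_mul_add_one_sq_modEq_one hn3)
    (huv.one_add_mul_pow_cube hω hq hn hh0 he) (one_pow 3), one_pow]

lemma one_add_mul_pow_eq_of_ne (huv : IsCardanoPair ω h e u v) (hω : IsPrimitiveRoot ω 3)
    (hq : q = 2 ^ m) (hn : q ^ 2 = 3 * n + 1) (hn3 : n % 3 ≠ 1) (hh0 : h ≠ 0) (he : e ^ q = e)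
    (hne_one : (1 + ω * e) ^ n ≠ 1) (hne_sq : ((1 + ω * e) ^ n) ^ (2 * n + 1) ≠ ω ^ 2) :
    ((1 + ω * e) ^ n) ^ (2 * n + 1) = ω := by
  obtain ⟨i, hi, hωi⟩ := hω.eq_pow_of_pow_eq_one (huv.one_add_mul_pow_pow_cube hω hq hn hh0 he)
  interval_cases i
  · rw [pow_zero, eq_comm, huv.one_add_mul_pow_eq_one_iff hω hq hn hn3 hh0 he] at hωi
    exact absurd hωi hne_one
  · rw [← hωi, pow_one]
  · exact absurd hωi.symm hne_sq

lemma zhengRoots_eq_mobius_image_cube_eq (huv : IsCardanoPair ω h e u v)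
    (hω : IsPrimitiveRoot ω 3) (hq : q = 2 ^ m) (hn : q ^ 2 = 3 * n + 1) (hn3 : n % 3 ≠ 1)
    (hh : h ^ q = h) (hh0 : h ≠ 0) (he : e ^ q = e) (he2 : e ^ 2 ≠ e) :
    zhengRoots q h e = mobius u v '' {s | s ^ 3 = ((1 + ω * e) ^ n) ^ (2 * n + 1)} := by
  have hκ := huv.one_add_mul_pow_cube hω hq hn hh0 he
  have hu0 : u ≠ 0 := left_ne_zero_of_mul (huv.mul_eq ▸ hh0)
  have himage : zhengRoots q h e =
      mobius u v '' {s | s ^ 9 = 1 ∧ mobius u v s ^ q = mobius u v (s ^ 2)⁻¹} := by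
    have h_mul := huv.mul_eq
    have h_add := huv.cube_add_cube hω
    subst h_mul h_add
    exact zhengRoots_eq_mobius_image hq hh he (huv.pow_nine_ne hω he2)
  rw [himage]
  congr 1
  ext s
  rw [Set.mem_ofPred_eq, Set.mem_ofPred_eq]
  have condition_iff (hs : s ^ 9 = 1) : mobius u v s ^ q = mobius u v (s ^ 2)⁻¹ ↔
      s ^ 3 = ((1 + ω * e) ^ n) ^ (2 * n + 1) := by
    rw [huv.mobius_pow_eq_iff hω hq hh hh0 he he2 hs, huv.pow_sq_eq hn, mul_left_inj' hu0, hn,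
      show 2 * (3 * n + 1) + 1 = 3 * (2 * n + 1) by ring, pow_mul]
    exact pow_eq_iff_eq_pow_of_sq_modEq_one (two_mul_add_one_sq_modEq_one hn3)
      (by rw [← pow_mul, hs]) hκ
  refine ⟨fun ⟨hs, hpow⟩ => (condition_iff hs).mp hpow, fun hs3 => ?_⟩
  have hs : s ^ 9 = 1 := by rw [pow_mul s 3 3, hs3, huv.one_add_mul_pow_pow_cube hω hq hn hh0 he]
  exact ⟨hs, (condition_iff hs).mpr hs3⟩

lemma ncard_zhengRoots [IsAlgClosed F] (huv : IsCardanoPair ω h e u v)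
    (hω : IsPrimitiveRoot ω 3) (hq : q = 2 ^ m) (hn : q ^ 2 = 3 * n + 1) (hn3 : n % 3 ≠ 1)
    (hh : h ^ q = h) (hh0 : h ≠ 0) (he : e ^ q = e) (he2 : e ^ 2 ≠ e) :
    (zhengRoots q h e).ncard = 3 := by
  rw [huv.zhengRoots_eq_mobius_image_cube_eq hω hq hn hn3 hh hh0 he he2]
  exact ncard_mobius_image_cube_eq hω (huv.pow_nine_ne hω he2)
    (huv.one_add_mul_pow_pow_cube hω hq hn hh0 he)

lemma pow_eq_self_iff_of_mem_zhengRoots (huv : IsCardanoPair ω h e u v)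
    (hω : IsPrimitiveRoot ω 3) (hq : q = 2 ^ m) (hn : q ^ 2 = 3 * n + 1) (hn3 : n % 3 ≠ 1)
    (hh : h ^ q = h) (hh0 : h ≠ 0) (he : e ^ q = e) (he2 : e ^ 2 ≠ e)
    (hx : x ∈ zhengRoots q h e) : x ^ q = x ↔ (1 + ω * e) ^ n = 1 := by
  have hstep := ((mem_zhengRoots_iff hq hh he).mp hx).2
  rw [huv.zhengRoots_eq_mobius_image_cube_eq hω hq hn hn3 hh hh0 he he2] at hx
  obtain ⟨s, hs3, rfl⟩ := hx
  rw [Set.mem_ofPred_eq] at hs3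
  have hne := huv.pow_nine_ne hω he2
  have hs : s ^ 9 = 1 := by
    rw [pow_mul s 3 3, hs3, huv.one_add_mul_pow_pow_cube hω hq hn hh0 he]
  rw [← huv.cube_add_cube hω, ← huv.mul_eq, isStep_mobius_iff hne hs] at hstep
  rw [hstep, mobius_inv_sq_eq_self_iff hne hs, hs3,
    huv.one_add_mul_pow_eq_one_iff hω hq hn hn3 hh0 he]

lemma zhengRoots_subset_iff [IsAlgClosed F] (huv : IsCardanoPair ω h e u v)
    (hω : IsPrimitiveRoot ω 3) (hq : q = 2 ^ m) (hn : q ^ 2 = 3 * n + 1) (hn3 : n % 3 ≠ 1)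
    (hh : h ^ q = h) (hh0 : h ≠ 0) (he : e ^ q = e) (he2 : e ^ 2 ≠ e) :
    zhengRoots q h e ⊆ {x | x ^ q = x} ↔ (1 + ω * e) ^ n = 1 := by
  have hiff {x : F} (hx : x ∈ zhengRoots q h e) : x ^ q = x ↔ (1 + ω * e) ^ n = 1 :=
    huv.pow_eq_self_iff_of_mem_zhengRoots hω hq hn hn3 hh hh0 he he2 hx
  obtain ⟨x, hx⟩ : (zhengRoots q h e).Nonempty :=
    Set.nonempty_of_ncard_ne_zero
      (by rw [huv.ncard_zhengRoots hω hq hn hn3 hh hh0 he he2]; norm_num)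
  exact ⟨fun hsub => (hiff hx).mp (hsub hx), fun hκ y hy => (hiff hy).mpr hκ⟩

lemma add_pow_eq_iff (huv : IsCardanoPair ω h e u v) (hω : IsPrimitiveRoot ω 3)
    (hq : q = 2 ^ m) (hn : q ^ 2 = 3 * n + 1) (hn3 : n % 3 ≠ 1)
    (hh : h ^ q = h) (hh0 : h ≠ 0) (he : e ^ q = e) :
    (e + ω) ^ n = ω ↔ ((1 + ω * e) ^ n) ^ (2 * n + 1) = ω ^ 2 := by
  have hω0 : ω ≠ 0 := hω.ne_zero (by norm_num)
  have hκ := huv.one_add_mul_pow_cube hω hq hn hh0 he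
  have hprod : (1 + ω * e) ^ n * (1 + ω ^ 2 * e) ^ n = 1 := by
    have hhq : h ^ q ^ 2 = h := by rw [sq, pow_mul, hh, hh]
    apply mul_right_cancel₀ hh0
    rw [← mul_pow, ← huv.cube_left, ← huv.cube_right, ← mul_pow, huv.mul_eq, ← pow_mul,
      ← pow_succ, ← hn, hhq, one_mul]
  have hfactor : e + ω = ω * (1 + ω ^ 2 * e) := by linear_combination -e * hω.pow_eq_one
  have hκ0 : (1 + ω * e) ^ n ≠ 0 := left_ne_zero_of_mul_eq_one hprod
  calc (e + ω) ^ n = ω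
      ↔ (1 + ω * e) ^ n * (ω ^ n * (1 + ω ^ 2 * e) ^ n) = (1 + ω * e) ^ n * ω := by
        rw [hfactor, mul_pow, mul_right_inj' hκ0]
    _ ↔ ω ^ n = (1 + ω * e) ^ n * ω := by rw [mul_left_comm, hprod, mul_one]
    _ ↔ (1 + ω * e) ^ n = (ω ^ 2) ^ (2 * n + 1) := by
        have hpow : (ω ^ 2) ^ (2 * n + 1) * ω = ω ^ n := by
          rw [← pow_mul, ← pow_succ]
          exact pow_eq_pow_of_modEq (n := 3) (by rw [Nat.ModEq]; omega) hω.pow_eq_one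
        rw [← hpow, mul_left_inj' hω0, eq_comm]
    _ ↔ ((1 + ω * e) ^ n) ^ (2 * n + 1) = ω ^ 2 :=
        (pow_eq_iff_eq_pow_of_sq_modEq_one (two_mul_add_one_sq_modEq_one hn3) hκ
          (by rw [pow_right_comm, hω.pow_eq_one, one_pow])).symm

lemma mobius_image_cube_eq_sq (huv : IsCardanoPair ω h e u v) (hω : IsPrimitiveRoot ω 3)
    (he : e ^ 2 ≠ e) : mobius u v '' {s | s ^ 3 = ω ^ 2} =
      {x | x ^ 3 + h ^ 2 * x ^ 2 + (e + 1) * h * x + 1 = 0} := by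
  ext x
  have hdiff : (u * x + v ^ 2) ^ 3 - ω ^ 2 * (v * x + u ^ 2) ^ 3 =
      ω * (x ^ 3 + h ^ 2 * x ^ 2 + (e + 1) * h * x + 1) := by
    have hω' := sq_add_self_add_one_of_isPrimitiveRoot_three hω
    obtain ⟨hu, hv, rfl⟩ := huv
    clear * - hω' hu hv
    grind
  rw [mem_mobius_image_cube_eq_iff (huv.pow_nine_ne hω he)
    (by rw [pow_right_comm, hω.pow_eq_one, one_pow]), ← sub_eq_zero, hdiff, Set.mem_ofPred_eq,
    mul_eq_zero_iff_left (hω.ne_zero (by norm_num))]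

lemma mobius_image_cube_eq_self (huv : IsCardanoPair ω h e u v) (hω : IsPrimitiveRoot ω 3)
    (he : e ^ 2 ≠ e) : mobius u v '' {s | s ^ 3 = ω} =
      {x | (e + 1) * x ^ 3 + h ^ 2 * x ^ 2 + h * x + (e ^ 2 + 1) = 0} := by
  ext x
  have hdiff : (u * x + v ^ 2) ^ 3 - ω * (v * x + u ^ 2) ^ 3 =
      ω ^ 2 * ((e + 1) * x ^ 3 + h ^ 2 * x ^ 2 + h * x + (e ^ 2 + 1)) := by
    have hω' := sq_add_self_add_one_of_isPrimitiveRoot_three hω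
    obtain ⟨hu, hv, rfl⟩ := huv
    clear * - hω' hu hv
    grind
  rw [mem_mobius_image_cube_eq_iff (huv.pow_nine_ne hω he) hω.pow_eq_one, ← sub_eq_zero, hdiff,
    Set.mem_ofPred_eq, mul_eq_zero_iff_left (pow_ne_zero 2 (hω.ne_zero (by norm_num)))]

end IsCardanoPair

theorem zheng_refined_general [IsAlgClosed F] (hm3 : m % 3 ≠ 1) (hq : q = 2 ^ m)
    (hω : IsPrimitiveRoot ω 3) (hh : h ^ q = h) (hh0 : h ≠ 0) (he : e ^ q = e) (he2 : e ^ 2 ≠ e)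
    (hcube : h ^ 3 = e ^ 2 + e + 1) :
    (zhengRoots q h e).ncard = 3 ∧
    (zhengRoots q h e ⊆ {x | x ^ q = x} ↔ ∃ y : F, y ^ q ^ 2 = y ∧ y ^ 3 = 1 + ω * e) ∧
    (¬ zhengRoots q h e ⊆ {x | x ^ q = x} →
      zhengRoots q h e ⊆ {x | x ^ q ^ 3 = x ∧ x ^ q ≠ x} ∧
      ((e + ω) ^ ((q ^ 2 - 1) / 3) = ω →
        zhengRoots q h e = {x | x ^ 3 + h ^ 2 * x ^ 2 + (e + 1) * h * x + 1 = 0}) ∧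
      ((e + ω) ^ ((q ^ 2 - 1) / 3) ≠ ω →
        zhengRoots q h e =
          {x | (e + 1) * x ^ 3 + h ^ 2 * x ^ 2 + h * x + (e ^ 2 + 1) = 0})) := by
  obtain ⟨n, hn, hn3⟩ := exists_two_pow_sq_eq_three_mul_add_one hm3
  rw [← hq] at hn
  obtain ⟨u, v, huv⟩ := exists_isCardanoPair hω hh0 hcube
  have hΓ := huv.zhengRoots_eq_mobius_image_cube_eq hω hq hn hn3 hh hh0 he he2
  have hfixed := huv.zhengRoots_subset_iff hω hq hn hn3 hh hh0 he he2
  have hχ := huv.add_pow_eq_iff hω hq hn hn3 hh hh0 he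
  have hexp : (q ^ 2 - 1) / 3 = n := by omega
  rw [hfixed, hexp, hn]
  refine ⟨huv.ncard_zhengRoots hω hq hn hn3 hh hh0 he he2,
    (exists_pow_mul_add_one_eq_self_and_pow_eq_iff three_pos (huv.one_add_mul_ne_zero hh0)).symm,
    fun hκ1 => ⟨fun x hx => ⟨hx.1, fun hxq => hκ1 ?_⟩, fun hω_eq => ?_, fun hω_ne => ?_⟩⟩
  · exact (huv.pow_eq_self_iff_of_mem_zhengRoots hω hq hn hn3 hh hh0 he he2 hx).mp hxq
  · rw [hΓ, hχ.mp hω_eq, huv.mobius_image_cube_eq_sq hω he2]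
  · have hτω : ((1 + ω * e) ^ n) ^ (2 * n + 1) = ω :=
      huv.one_add_mul_pow_eq_of_ne hω hq hn hn3 hh0 he hκ1 (mt hχ.mpr hω_ne)
    rw [hΓ, hτω, huv.mobius_image_cube_eq_self hω he2]

end CardanoPair

end Field

/-- Proposition 7.2: the set `Γ` of roots in `F_{q³}` of `X^(2q²+1) + hX + e` has exactly
three elements; `Γ ⊆ F_q` iff `1 + ωe` is a cube in `F_{q²}`; and if `Γ ⊄ F_q` then
`Γ ⊆ F_{q³} \ F_q` and `Γ` is the set of roots of the stated cubic. -/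
theorem zheng_refined
    (m : ℕ) (hm : 0 < m) (hm3 : ¬ m % 3 = 1)
    (q : ℕ) (hq : q = 2 ^ m)
    (ω : K) (hω4 : ω ^ 4 = ω) (hω2 : ω ^ 2 ≠ ω)
    (h e : K) (hhq : h ^ q = h) (hh2 : h ^ 2 ≠ h)
    (heq : e ^ q = e) (he2 : e ^ 2 ≠ e)
    (hcube : h ^ 3 = e ^ 2 + e + 1)
    (Γ : Set K)
    (hΓ : Γ = {x : K | x ^ q ^ 3 = x ∧ x ^ (2 * q ^ 2 + 1) + h * x + e = 0}) :
    Γ.ncard = 3 ∧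
    (Γ ⊆ {x : K | x ^ q = x} ↔ ∃ y : K, y ^ q ^ 2 = y ∧ y ^ 3 = 1 + ω * e) ∧
    (¬ Γ ⊆ {x : K | x ^ q = x} →
      Γ ⊆ {x : K | x ^ q ^ 3 = x ∧ x ^ q ≠ x} ∧
      ((e + ω) ^ ((q ^ 2 - 1) / 3) = ω →
        Γ = {x : K | x ^ 3 + h ^ 2 * x ^ 2 + (e + 1) * h * x + 1 = 0}) ∧
      ((e + ω) ^ ((q ^ 2 - 1) / 3) ≠ ω →
        Γ = {x : K | (e + 1) * x ^ 3 + h ^ 2 * x ^ 2 + h * x + (e ^ 2 + 1) = 0})) := by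
  subst hΓ
  have hh0 : h ≠ 0 := by rintro rfl; simp at hh2
  exact zheng_refined_general hm3 hq (isPrimitiveRoot_three_of_pow_four_eq hω4 hω2) hhq hh0 heq he2
    hcube
end

section
/- For any a ∈ F_q^*, the number of roots in F_q of the polynomial X^(Q+1) + X + a lies in {0, 1, 2, 1 + p^gcd(m,n)}. Moreover, if p = 2 and gcd(m,n) = 1, then this number of roots lies in {0, 1, 3}. -/
open Polynomial

/-!
Write `Q = p ^ n` and let `σ` be the `n`-th power of the Frobenius endomorphism, so that the
equation is the case `b = 0`, `c = 1`, `d = a` of `σ x * x + b * σ x + c * x + d = 0`. If `r` is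
one solution, the substitution `x = r + t⁻¹` turns the remaining solutions into those of the affine
equation `u * σ t + v * t = -1`, where `u = σ r + c` and `v = r + b`. A nonempty solution set of the
latter is a translate of the zeros of `t ↦ u * σ t + v * t`, and these are `{0}` or a multiple of
the fixed field of `σ`, which has `p ^ gcd m n` elements. If the fixed field is `{0, 1}`, then
`t ↦ σ t / t` is injective, hence surjective, on the units; as `u * v = b * c - d`, the zeros are
then not just `{0}` when `d ≠ b * c`.
-/

section Endomorphism

variable {F : Type*} [Field F] {σ : F →+* F} {b c d r u v w : F}

theorem semilinear_zeros_eq_image_fixedPoints {z : F} (hu : u ≠ 0) (hz : z ≠ 0)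
    (hzero : u * σ z + v * z = 0) :
    {t | u * σ t + v * t = 0} = (z * ·) '' Function.fixedPoints σ := by
  ext t
  simp only [Set.mem_ofPred_eq, Set.mem_image, Function.mem_fixedPoints, Function.IsFixedPt]
  constructor
  · intro ht
    refine ⟨t / z, ?_, mul_div_cancel₀ t hz⟩
    rw [map_div₀, div_eq_div_iff ((map_ne_zero σ).mpr hz) hz]
    apply mul_left_cancel₀ hu
    linear_combination z * ht - t * hzero
  · rintro ⟨s, hs, rfl⟩
    rw [map_mul, hs]
    linear_combination s * hzero

theorem ncard_semilinear_zeros_of_exists_ne_zero (hu : u ≠ 0) (hz : ∃ z ≠ 0, u * σ z + v * z = 0) :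
    {t | u * σ t + v * t = 0}.ncard = (Function.fixedPoints σ).ncard := by
  obtain ⟨z, hz, hzero⟩ := hz
  rw [semilinear_zeros_eq_image_fixedPoints hu hz hzero,
    Set.ncard_image_of_injective _ (mul_right_injective₀ hz)]

theorem ncard_semilinear_zeros_eq_one_or (huv : u ≠ 0 ∨ v ≠ 0) :
    {t | u * σ t + v * t = 0}.ncard = 1 ∨
      {t | u * σ t + v * t = 0}.ncard = (Function.fixedPoints σ).ncard := by
  by_cases hz : ∃ z ≠ 0, u * σ z + v * z = 0
  · have hu : u ≠ 0 := by
      rintro rfl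
      obtain ⟨z, hz, hzero⟩ := hz
      simp_all
    exact .inr (ncard_semilinear_zeros_of_exists_ne_zero hu hz)
  · left
    push Not at hz
    have hsingleton : {t | u * σ t + v * t = 0} = {0} := by
      refine Set.eq_singleton_iff_unique_mem.mpr ⟨by simp, fun t ht => ?_⟩
      by_contra ht0
      exact hz t ht0 ht
    rw [hsingleton, Set.ncard_singleton]

theorem semilinear_fiber_eq_image_zeros {y : F} (hy : u * σ y + v * y = w) :
    {t | u * σ t + v * t = w} = (y + ·) '' {t | u * σ t + v * t = 0} := by
  ext t
  simp only [Set.mem_ofPred_eq, Set.mem_image]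
  constructor
  · intro ht
    refine ⟨t - y, ?_, add_sub_cancel y t⟩
    rw [map_sub]
    linear_combination ht - hy
  · rintro ⟨s, hs, rfl⟩
    rw [map_add]
    linear_combination hs + hy

theorem ncard_semilinear_fiber_eq_zero_or (u v w : F) (σ : F →+* F) :
    {t | u * σ t + v * t = w}.ncard = 0 ∨
      {t | u * σ t + v * t = w}.ncard = {t | u * σ t + v * t = 0}.ncard := by
  rcases Set.eq_empty_or_nonempty {t | u * σ t + v * t = w} with hempty | ⟨y, hy⟩
  · simp [hempty]
  · right
    rw [semilinear_fiber_eq_image_zeros hy,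
      Set.ncard_image_of_injective _ (add_right_injective y)]

theorem ncard_semilinear_fiber_mem (hw : w ≠ 0) :
    {t | u * σ t + v * t = w}.ncard ∈ ({0, 1, (Function.fixedPoints σ).ncard} : Set ℕ) := by
  by_cases huv : u ≠ 0 ∨ v ≠ 0
  · rcases ncard_semilinear_fiber_eq_zero_or u v w σ with h | h
    · exact .inl h
    · rw [h]
      exact .inr (ncard_semilinear_zeros_eq_one_or huv)
  · push Not at huv
    simp [huv, hw.symm]

theorem exists_ne_zero_semilinear_eq_zero [Finite F]
    (hfix : (Function.fixedPoints σ).ncard = 2) (hu : u ≠ 0) (hv : v ≠ 0) :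
    ∃ z ≠ 0, u * σ z + v * z = 0 := by
  have hfixed : ∀ x ≠ 0, σ x = x → x = 1 := by
    intro x hx hσx
    by_contra hx1
    have hsubset : ({0, 1, x} : Set F) ⊆ Function.fixedPoints σ := by
      rintro y (rfl | rfl | rfl)
      exacts [map_zero σ, map_one σ, hσx]
    have hle := Set.ncard_le_ncard hsubset
    have hthree : ({0, 1, x} : Set F).ncard = 3 :=
      Set.ncard_eq_three.mpr ⟨0, 1, x, zero_ne_one, hx.symm, Ne.symm hx1, rfl⟩
    omega
  let quotientHom : Fˣ →* Fˣ := Units.map σ / MonoidHom.id Fˣ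
  have hinj : Function.Injective quotientHom := by
    refine (injective_iff_map_eq_one quotientHom).mpr fun x hx => Units.ext ?_
    exact hfixed x x.ne_zero (congrArg Units.val (div_eq_one.mp hx))
  obtain ⟨z, hz⟩ := Finite.surjective_of_injective hinj
    (Units.mk0 (-v / u) (div_ne_zero (neg_ne_zero.mpr hv) hu))
  have hσz : σ z = -v / u * z := congrArg Units.val (div_eq_iff_eq_mul.mp hz)
  refine ⟨z, z.ne_zero, ?_⟩
  rw [hσz]
  field_simp
  ring

theorem semiquadratic_add_inv_mul {t : F} (hr : σ r * r + b * σ r + c * r + d = 0) (ht : t ≠ 0) :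
    (σ (r + t⁻¹) * (r + t⁻¹) + b * σ (r + t⁻¹) + c * (r + t⁻¹) + d) * (σ t * t) =
      (σ r + c) * σ t + (r + b) * t + 1 := by
  have hσt : σ t ≠ 0 := (map_ne_zero σ).mpr ht
  rw [map_add, map_inv₀]
  field_simp
  linear_combination σ t * t * hr

theorem semiquadratic_zeros_eq_insert (hr : σ r * r + b * σ r + c * r + d = 0) :
    {x | σ x * x + b * σ x + c * x + d = 0} =
      insert r ((fun t => r + t⁻¹) '' {t | (σ r + c) * σ t + (r + b) * t = -1}) := by
  ext x
  simp only [Set.mem_ofPred_eq, Set.mem_insert_iff, Set.mem_image, eq_neg_iff_add_eq_zero]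
  constructor
  · intro hx
    refine or_iff_not_imp_left.mpr fun hxr => ⟨(x - r)⁻¹, ?_, by simp⟩
    rw [← semiquadratic_add_inv_mul hr (inv_ne_zero (sub_ne_zero.mpr hxr)), inv_inv,
      add_sub_cancel, hx, zero_mul]
  · rintro (rfl | ⟨t, ht, rfl⟩)
    · exact hr
    · have ht0 : t ≠ 0 := by
        rintro rfl
        simp at ht
      rw [← semiquadratic_add_inv_mul hr ht0] at ht
      exact (mul_eq_zero.mp ht).resolve_right (mul_ne_zero ((map_ne_zero σ).mpr ht0) ht0)

theorem ncard_semiquadratic_zeros_of_root [Finite F]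
    (hr : σ r * r + b * σ r + c * r + d = 0) :
    {x | σ x * x + b * σ x + c * x + d = 0}.ncard =
      {t | (σ r + c) * σ t + (r + b) * t = -1}.ncard + 1 := by
  have hinj : Function.Injective (fun t : F => r + t⁻¹) :=
    (add_right_injective r).comp inv_injective
  have hnotMem : r ∉ (fun t => r + t⁻¹) '' {t | (σ r + c) * σ t + (r + b) * t = -1} := by
    rintro ⟨t, ht, htr⟩
    obtain rfl : t = 0 := by simpa using htr
    simp at ht
  rw [semiquadratic_zeros_eq_insert hr, Set.ncard_insert_of_notMem hnotMem,
    Set.ncard_image_of_injective _ hinj]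

theorem ncard_semiquadratic_zeros_mem [Finite F] (σ : F →+* F) (b c d : F) :
    {x | σ x * x + b * σ x + c * x + d = 0}.ncard ∈
      ({0, 1, 2, 1 + (Function.fixedPoints σ).ncard} : Set ℕ) := by
  rcases Set.eq_empty_or_nonempty {x | σ x * x + b * σ x + c * x + d = 0} with hempty | ⟨r, hr⟩
  · simp [hempty]
  · rw [ncard_semiquadratic_zeros_of_root hr]
    have hfiber := ncard_semilinear_fiber_mem (u := σ r + c) (v := r + b) (σ := σ)
      (neg_ne_zero.mpr one_ne_zero)
    simp only [Set.mem_insert_iff, Set.mem_singleton_iff] at hfiber ⊢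
    omega

theorem ncard_semiquadratic_zeros_mem_of_ncard_fixedPoints_eq_two [Finite F]
    (hfix : (Function.fixedPoints σ).ncard = 2) (hd : d ≠ b * c) :
    {x | σ x * x + b * σ x + c * x + d = 0}.ncard ∈ ({0, 1, 3} : Set ℕ) := by
  rcases Set.eq_empty_or_nonempty {x | σ x * x + b * σ x + c * x + d = 0} with hempty | ⟨r, hr⟩
  · simp [hempty]
  · have hprod : (σ r + c) * (r + b) ≠ 0 := by
      intro h
      apply hd
      linear_combination hr.out - h
    have hu := left_ne_zero_of_mul hprod
    have hker := ncard_semilinear_zeros_of_exists_ne_zero hu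
      (exists_ne_zero_semilinear_eq_zero hfix hu (right_ne_zero_of_mul hprod))
    rw [ncard_semiquadratic_zeros_of_root hr]
    rcases ncard_semilinear_fiber_eq_zero_or (σ r + c) (r + b) (-1) σ with h | h
    · simp [h]
    · simp [h, hker, hfix]

end Endomorphism

section Frobenius

variable {F : Type*} [Field F] {p m : ℕ}

theorem setOf_pow_eq_self_eq_insert {k : ℕ} (hk : 0 < k) :
    {t : F | t ^ k = t} =
      insert 0 (Units.val '' ((powMonoidHom (k - 1) : Fˣ →* Fˣ).ker : Set Fˣ)) := by
  obtain ⟨k, rfl⟩ := Nat.exists_eq_succ_of_ne_zero hk.ne'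
  ext t
  simp only [Set.mem_ofPred_eq, Set.mem_insert_iff, Set.mem_image, SetLike.mem_coe,
    MonoidHom.mem_ker, powMonoidHom_apply, Nat.succ_sub_one, Nat.succ_eq_add_one, pow_succ]
  constructor
  · intro ht
    refine or_iff_not_imp_left.mpr fun ht0 => ⟨Units.mk0 t ht0, Units.ext ?_, rfl⟩
    exact mul_right_cancel₀ ht0 (ht.trans (one_mul t).symm)
  · rintro (rfl | ⟨x, hx, rfl⟩)
    · exact mul_zero _
    · rw [← Units.val_pow_eq_pow_val, hx, Units.val_one, one_mul]

variable [Finite F]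

theorem ncard_fixedPoints_iterateFrobenius [ExpChar F p] (hF : Nat.card F = p ^ m) (n : ℕ) :
    (Function.fixedPoints (iterateFrobenius F p n)).ncard = p ^ Nat.gcd m n := by
  have hp : 0 < p := expChar_pos F p
  have hker : ((powMonoidHom (p ^ n - 1) : Fˣ →* Fˣ).ker : Set Fˣ).ncard =
      p ^ Nat.gcd m n - 1 := by
    rw [← Nat.card_coe_set_eq, SetLike.coe_sort_coe, IsCyclic.card_powMonoidHom_ker,
      Nat.card_units, hF, Nat.pow_sub_one_gcd_pow_sub_one]
  change {t : F | t ^ p ^ n = t}.ncard = _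
  rw [setOf_pow_eq_self_eq_insert (pow_pos hp n), Set.ncard_insert_of_notMem (by simp),
    Set.ncard_image_of_injective _ Units.val_injective, hker, Nat.sub_add_cancel (pow_pos hp _)]

theorem trinomial_root_count_general [Fact p.Prime] (hF : Nat.card F = p ^ m) (n : ℕ)
    (b c d : F) :
    {x : F | x ^ (p ^ n + 1) + b * x ^ p ^ n + c * x + d = 0}.ncard ∈
      ({0, 1, 2, 1 + p ^ Nat.gcd m n} : Set ℕ) ∧
    (p = 2 → Nat.gcd m n = 1 → d ≠ b * c →
      {x : F | x ^ (p ^ n + 1) + b * x ^ p ^ n + c * x + d = 0}.ncard ∈ ({0, 1, 3} : Set ℕ)) := by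
  have := Fintype.ofFinite F
  have : CharP F p := charP_of_card_eq_prime_pow (Nat.card_eq_fintype_card.symm.trans hF)
  have hfix := ncard_fixedPoints_iterateFrobenius hF n
  simp only [pow_succ _ (p ^ n), ← iterateFrobenius_def]
  refine ⟨hfix ▸ ncard_semiquadratic_zeros_mem (iterateFrobenius F p n) b c d, ?_⟩
  rintro rfl hgcd hd
  rw [hgcd, pow_one] at hfix
  exact ncard_semiquadratic_zeros_mem_of_ncard_fixedPoints_eq_two hfix hd

end Frobenius

/-- Lemma 2.2: for `q = p^m`, `Q = p^n`, and `a ∈ F_q^*`, the number of roots in `F_q` of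
`X^(Q+1) + X + a` lies in `{0, 1, 2, 1 + p^gcd(m,n)}`; if `p = 2` and `gcd(m,n) = 1`
then it lies in `{0, 1, 3}`. -/
theorem trinomial_root_count
    (p : ℕ) [Fact p.Prime] (m n : ℕ) (hm : 0 < m) (hn : 0 < n)
    (Q : ℕ) (hQ : Q = p ^ n)
    (a : GaloisField p m) (ha : a ≠ 0) :
    {x : GaloisField p m | x ^ (Q + 1) + x + a = 0}.ncard ∈
      ({0, 1, 2, 1 + p ^ Nat.gcd m n} : Set ℕ) ∧
    (p = 2 → Nat.gcd m n = 1 →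
      {x : GaloisField p m | x ^ (Q + 1) + x + a = 0}.ncard ∈ ({0, 1, 3} : Set ℕ)) := by
  subst hQ
  simpa [ha] using trinomial_root_count_general (GaloisField.card p m hm.ne') n 0 1 a
end

section
/- For any a ∈ F_{q³}^* and any positive integer ℓ coprime to 3, the number of roots in F_{q³} of the polynomial X^(2q^ℓ+1) + X + a lies in {0, 1, 2, 9} if m ≡ −ℓ (mod 3), and lies in {0, 1, 3} otherwise. -/
open Polynomial

local notation "K" => AlgebraicClosure (ZMod 2)

/-!
Let `σ` be an endomorphism of a field `F` and consider `σ x * x + b * x + c = 0` with `c ≠ 0`, the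
given trinomial being the case where `σ` is a power of Frobenius. If `x₀` is one root, then
`x = x₀ + v⁻¹` is another one exactly when `(σ x₀ + b) * σ v + x₀ * v = -1`. The left side is
additive in `v`, so its fibres are empty or translates of its kernel; the quotient of two nonzero
kernel elements is fixed by `σ`, so the kernel is `0` or has as many elements as the fixed field of
`σ`. The number of roots is therefore `0`, `1`, `2` or one more than the size of the fixed field. If
`F` is finite and the fixed field is `𝔽₂`, then `u ↦ σ u / u` is injective, hence surjective, on
`Fˣ`; so the kernel is nonzero and the value `2` does not occur.
-/

open Function

lemma encard_preimage_singleton_eq_zero_or {G H : Type*} [AddGroup G] [AddGroup H]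
    (f : G →+ H) (y : H) :
    (f ⁻¹' {y}).encard = 0 ∨ (f ⁻¹' {y}).encard = (f.ker : Set G).encard := by
  rcases (f ⁻¹' {y}).eq_empty_or_nonempty with hempty | ⟨x, rfl⟩
  · exact Or.inl (Set.encard_eq_zero.mpr hempty)
  · exact Or.inr (Set.encard_congr (f.fiberEquivKer x))

section FieldEndomorphism

variable {F : Type*} [Field F] (σ : F →+* F)

/-- The additive map `v ↦ A * σ v + B * v`, linear over the fixed field of `σ`. -/
def twistedLinear (A B : F) : F →+ F :=
  (AddMonoidHom.mulLeft A).comp σ + AddMonoidHom.mulLeft B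

/-- The solution set of the Riccati equation `σ x * x + b * x + c = 0`, which is the trinomial
equation `x ^ (p ^ k + 1) + b * x + c = 0` when `σ` is the `k`-th power of Frobenius. -/
def riccatiSet (b c : F) : Set F :=
  {x | σ x * x + b * x + c = 0}

variable {σ}

@[simp]
lemma twistedLinear_apply (A B v : F) : twistedLinear σ A B v = A * σ v + B * v := rfl

@[simp]
lemma mem_riccatiSet {b c x : F} : x ∈ riccatiSet σ b c ↔ σ x * x + b * x + c = 0 := Iff.rfl

lemma ker_twistedLinear_eq_image {A B u : F} (hA : A ≠ 0) (hu : u ≠ 0)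
    (huker : u ∈ (twistedLinear σ A B).ker) :
    ((twistedLinear σ A B).ker : Set F) = (u * ·) '' fixedPoints σ := by
  have hσu : σ u ≠ 0 := (map_ne_zero σ).mpr hu
  rw [AddMonoidHom.mem_ker, twistedLinear_apply] at huker
  ext v
  simp only [SetLike.mem_coe, AddMonoidHom.mem_ker, twistedLinear_apply, Set.mem_image,
    mem_fixedPoints, IsFixedPt]
  constructor
  · intro hv
    refine ⟨v / u, ?_, mul_div_cancel₀ v hu⟩
    rw [map_div₀, div_eq_div_iff hσu hu]
    exact mul_left_cancel₀ hA (by linear_combination u * hv - v * huker)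
  · rintro ⟨t, ht, rfl⟩
    rw [map_mul, ht]
    linear_combination t * huker

lemma ker_twistedLinear_eq_bot_or_encard_eq {A : F} (hA : A ≠ 0) (B : F) :
    (twistedLinear σ A B).ker = ⊥ ∨
      ((twistedLinear σ A B).ker : Set F).encard = (fixedPoints σ).encard := by
  rw [or_iff_not_imp_left, ← ne_eq, AddSubgroup.ne_bot_iff_exists_ne_zero]
  rintro ⟨⟨u, huker⟩, hne⟩
  have hu : u ≠ 0 := fun h => hne (Subtype.ext h)
  rw [ker_twistedLinear_eq_image hA hu huker, (mul_right_injective₀ hu).encard_image]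

lemma exists_map_eq_mul_of_fixedPoints_subset [Finite F] (hfix : fixedPoints σ ⊆ {0, 1})
    {b : F} (hb : b ≠ 0) : ∃ u : F, u ≠ 0 ∧ σ u = b * u := by
  let φ : Fˣ →* Fˣ := Units.map (σ : F →* F) / MonoidHom.id Fˣ
  have hinj : Injective φ := by
    rw [injective_iff_map_eq_one]
    intro u hu
    have hσu : σ (u : F) = u := congrArg Units.val (div_eq_one.mp hu)
    exact Units.ext ((hfix hσu).resolve_left u.ne_zero)
  obtain ⟨u, hu⟩ := Finite.surjective_of_injective hinj (Units.mk0 b hb)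
  exact ⟨u, u.ne_zero, congrArg Units.val (div_eq_iff_eq_mul.mp hu)⟩

lemma ker_twistedLinear_ne_bot [Finite F] (hfix : fixedPoints σ ⊆ {0, 1}) {A B : F}
    (hA : A ≠ 0) (hB : B ≠ 0) : (twistedLinear σ A B).ker ≠ ⊥ := by
  obtain ⟨u, hu, hσu⟩ :=
    exists_map_eq_mul_of_fixedPoints_subset hfix (neg_ne_zero.mpr (div_ne_zero hB hA))
  rw [AddSubgroup.ne_bot_iff_exists_ne_zero]
  refine ⟨⟨u, ?_⟩, fun h => hu (congrArg Subtype.val h)⟩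
  rw [AddMonoidHom.mem_ker, twistedLinear_apply, hσu]
  field_simp
  ring

lemma add_inv_mem_riccatiSet_iff {b c x₀ v : F} (hx₀ : x₀ ∈ riccatiSet σ b c) (hv : v ≠ 0) :
    x₀ + v⁻¹ ∈ riccatiSet σ b c ↔ twistedLinear σ (σ x₀ + b) x₀ v = -1 := by
  have hσv : σ v ≠ 0 := (map_ne_zero σ).mpr hv
  rw [mem_riccatiSet] at hx₀
  have hcleared : σ v * v * (σ (x₀ + v⁻¹) * (x₀ + v⁻¹) + b * (x₀ + v⁻¹) + c) =
      twistedLinear σ (σ x₀ + b) x₀ v + 1 := by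
    rw [twistedLinear_apply, map_add, map_inv₀]
    field_simp
    linear_combination (σ v * v) * hx₀
  rw [mem_riccatiSet, eq_neg_iff_add_eq_zero, ← hcleared,
    mul_eq_zero_iff_left (mul_ne_zero hσv hv)]

lemma riccatiSet_eq_insert_image {b c x₀ : F} (hx₀ : x₀ ∈ riccatiSet σ b c) :
    riccatiSet σ b c =
      insert x₀ ((fun v => x₀ + v⁻¹) '' (twistedLinear σ (σ x₀ + b) x₀ ⁻¹' {-1})) := by
  ext x
  constructor
  · intro hx
    rcases eq_or_ne x x₀ with rfl | hne
    · exact Set.mem_insert _ _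
    · have hv : (x - x₀)⁻¹ ≠ 0 := inv_ne_zero (sub_ne_zero.mpr hne)
      have hxv : x₀ + (x - x₀)⁻¹⁻¹ = x := by rw [inv_inv, add_sub_cancel]
      exact Or.inr ⟨_, (add_inv_mem_riccatiSet_iff hx₀ hv).mp (by rwa [hxv]), hxv⟩
  · rintro (rfl | ⟨v, hv, rfl⟩)
    · exact hx₀
    · have hv0 : v ≠ 0 := by rintro rfl; simp at hv
      exact (add_inv_mem_riccatiSet_iff hx₀ hv0).mpr hv

lemma encard_riccatiSet_of_mem {b c x₀ : F} (hx₀ : x₀ ∈ riccatiSet σ b c) :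
    (riccatiSet σ b c).encard = (twistedLinear σ (σ x₀ + b) x₀ ⁻¹' {-1}).encard + 1 := by
  have hinj : Injective fun v : F => x₀ + v⁻¹ := (add_right_injective x₀).comp inv_injective
  have hnotMem : x₀ ∉ (fun v => x₀ + v⁻¹) '' (twistedLinear σ (σ x₀ + b) x₀ ⁻¹' {-1}) := by
    rintro ⟨v, hv, h⟩
    obtain rfl : v = 0 := by simpa using h
    simp at hv
  rw [riccatiSet_eq_insert_image hx₀, Set.encard_insert_of_notMem hnotMem, hinj.encard_image]

lemma exists_encard_riccatiSet_mem_ker (b : F) {c : F} (hc : c ≠ 0) :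
    ∃ A ≠ 0, ∃ B ≠ 0, (riccatiSet σ b c).encard ∈
      ({0, 1, ((twistedLinear σ A B).ker : Set F).encard + 1} : Set ℕ∞) := by
  rcases (riccatiSet σ b c).eq_empty_or_nonempty with hempty | ⟨x₀, hx₀⟩
  · exact ⟨1, one_ne_zero, 1, one_ne_zero, Or.inl (Set.encard_eq_zero.mpr hempty)⟩
  have hprod : (σ x₀ + b) * x₀ = -c := by
    rw [mem_riccatiSet] at hx₀
    linear_combination hx₀
  have hprod_ne : (σ x₀ + b) * x₀ ≠ 0 := hprod ▸ neg_ne_zero.mpr hc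
  refine ⟨σ x₀ + b, left_ne_zero_of_mul hprod_ne, x₀, right_ne_zero_of_mul hprod_ne, Or.inr ?_⟩
  rw [encard_riccatiSet_of_mem hx₀]
  rcases encard_preimage_singleton_eq_zero_or (twistedLinear σ (σ x₀ + b) x₀) (-1) with h | h
  · exact Or.inl (by rw [h, zero_add])
  · exact Or.inr (by rw [h, Set.mem_singleton_iff])

theorem encard_riccatiSet_mem (b : F) {c : F} (hc : c ≠ 0) :
    (riccatiSet σ b c).encard ∈ ({0, 1, 2, (fixedPoints σ).encard + 1} : Set ℕ∞) := by
  obtain ⟨A, hA, B, -, h⟩ := exists_encard_riccatiSet_mem_ker (σ := σ) b hc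
  simp only [Set.mem_insert_iff, Set.mem_singleton_iff] at h ⊢
  rcases ker_twistedLinear_eq_bot_or_encard_eq (σ := σ) hA B with hker | hker
  · rw [hker, AddSubgroup.coe_bot, Set.encard_singleton, one_add_one_eq_two] at h
    tauto
  · rw [hker] at h
    tauto

theorem encard_riccatiSet_mem_of_encard_fixedPoints_eq_two [Finite F]
    (hfix : (fixedPoints σ).encard = 2) (b : F) {c : F} (hc : c ≠ 0) :
    (riccatiSet σ b c).encard ∈ ({0, 1, 3} : Set ℕ∞) := by
  have hpair : {0, 1} = fixedPoints σ := by
    refine (Set.toFinite _).eq_of_subset_of_encard_le ?_ ?_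
    · rintro t (rfl | rfl)
      exacts [map_zero σ, map_one σ]
    · rw [hfix, Set.encard_pair zero_ne_one]
  obtain ⟨A, hA, B, hB, h⟩ := exists_encard_riccatiSet_mem_ker (σ := σ) b hc
  have hker := (ker_twistedLinear_eq_bot_or_encard_eq hA B).resolve_left
    (ker_twistedLinear_ne_bot hpair.ge hA hB)
  rwa [hker, hfix, two_add_one_eq_three] at h

end FieldEndomorphism

section Frobenius

lemma pow_pow_eq_self_iff_isPeriodicPt {M : Type*} [Monoid M] {p n : ℕ} {x : M} :
    x ^ p ^ n = x ↔ IsPeriodicPt (· ^ p) n x := by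
  rw [IsPeriodicPt, IsFixedPt, pow_iterate]

lemma pow_pow_gcd_eq_self_iff {M : Type*} [Monoid M] {p k n : ℕ} {x : M} :
    x ^ p ^ k.gcd n = x ↔ x ^ p ^ k = x ∧ x ^ p ^ n = x := by
  simp only [pow_pow_eq_self_iff_isPeriodicPt]
  exact ⟨fun h => ⟨h.trans_dvd (Nat.gcd_dvd_left k n), h.trans_dvd (Nat.gcd_dvd_right k n)⟩,
    fun h => h.1.gcd h.2⟩

variable {E : Type*} [Field E] {p : ℕ} [Fact p.Prime] [CharP E p]

variable (E p) in
/-- The subfield of elements of `E` fixed by the `n`-th power of Frobenius: for `n ≠ 0` and `E`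
separably closed, the copy of `𝔽_{p ^ n}` in `E`. -/
def frobeniusFixedField (n : ℕ) : Subfield E :=
  (iterateFrobenius E p n).eqLocusField (RingHom.id E)

lemma mem_frobeniusFixedField {n : ℕ} {x : E} :
    x ∈ frobeniusFixedField E p n ↔ x ^ p ^ n = x := by
  rw [frobeniusFixedField, RingHom.mem_eqLocusField, iterateFrobenius_def, RingHom.id_apply]

lemma setOf_trinomial_eq_image_riccatiSet {n : ℕ} (k : ℕ) (b c : frobeniusFixedField E p n) :
    {x : E | x ^ p ^ n = x ∧ x ^ (p ^ k + 1) + b * x + c = 0} =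
      Subtype.val '' riccatiSet (iterateFrobenius (frobeniusFixedField E p n) p k) b c := by
  ext x
  simp [iterateFrobenius_def, Subtype.ext_iff, mem_frobeniusFixedField, pow_succ, and_comm]

variable [IsSepClosed E]

lemma ncard_setOf_pow_pow_eq_self {n : ℕ} (hn : n ≠ 0) :
    {x : E | x ^ p ^ n = x}.ncard = p ^ n := by
  have hlt : 1 < p ^ n := Nat.one_lt_pow hn (Fact.out : p.Prime).one_lt
  have hdeg : (X ^ p ^ n - X : E[X]).natDegree = p ^ n :=
    FiniteField.X_pow_card_sub_X_natDegree_eq E hlt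
  have hne : (X ^ p ^ n - X : E[X]) ≠ 0 := FiniteField.X_pow_card_sub_X_ne_zero E hlt
  have hsep : (X ^ p ^ n - X : E[X]).Separable :=
    galois_poly_separable p (p ^ n) (dvd_pow_self p hn)
  have hroots : {x : E | x ^ p ^ n = x} = (X ^ p ^ n - X : E[X]).rootSet E := by
    ext x
    simp [mem_rootSet, hne, sub_eq_zero]
  rw [hroots, ← Nat.card_coe_set_eq, Nat.card_eq_fintype_card,
    card_rootSet_eq_natDegree hsep (IsSepClosed.splits_codomain _ hsep), hdeg]

lemma finite_frobeniusFixedField {n : ℕ} (hn : n ≠ 0) : Finite (frobeniusFixedField E p n) := by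
  have hfinite : {x : E | x ^ p ^ n = x}.Finite := by
    apply Set.finite_of_ncard_ne_zero
    rw [ncard_setOf_pow_pow_eq_self hn]
    exact pow_ne_zero n (Fact.out : p.Prime).ne_zero
  exact hfinite.subset fun _ hx => mem_frobeniusFixedField.mp hx

lemma encard_fixedPoints_iterateFrobenius {n : ℕ} (hn : n ≠ 0) (k : ℕ) :
    (fixedPoints (iterateFrobenius (frobeniusFixedField E p n) p k)).encard =
      (p ^ k.gcd n : ℕ) := by
  have := finite_frobeniusFixedField (E := E) (p := p) hn
  have himage : Subtype.val '' fixedPoints (iterateFrobenius (frobeniusFixedField E p n) p k) =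
      {x : E | x ^ p ^ k.gcd n = x} := by
    ext x
    simp [pow_pow_gcd_eq_self_iff, IsFixedPt, iterateFrobenius_def, Subtype.ext_iff,
      mem_frobeniusFixedField, and_comm]
  rw [← ncard_setOf_pow_pow_eq_self (E := E) (Nat.gcd_ne_zero_right hn), ← himage,
    Set.ncard_image_of_injective _ Subtype.val_injective, (Set.toFinite _).cast_ncard_eq]

theorem ncard_trinomial_roots_mem {n : ℕ} (hn : n ≠ 0) (k : ℕ) {b c : E}
    (hb : b ^ p ^ n = b) (hc : c ^ p ^ n = c) (hc0 : c ≠ 0) :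
    {x : E | x ^ p ^ n = x ∧ x ^ (p ^ k + 1) + b * x + c = 0}.ncard ∈
      ({0, 1, 2, p ^ k.gcd n + 1} : Set ℕ) := by
  lift b to frobeniusFixedField E p n using mem_frobeniusFixedField.mpr hb
  lift c to frobeniusFixedField E p n using mem_frobeniusFixedField.mpr hc
  have := finite_frobeniusFixedField (E := E) (p := p) hn
  have h := encard_riccatiSet_mem (σ := iterateFrobenius (frobeniusFixedField E p n) p k) b
    (c := c) (by simpa using hc0)
  rw [setOf_trinomial_eq_image_riccatiSet, Set.ncard_image_of_injective _ Subtype.val_injective]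
  rw [encard_fixedPoints_iterateFrobenius hn, ← (Set.toFinite _).cast_ncard_eq] at h
  simp only [Set.mem_insert_iff, Set.mem_singleton_iff] at h ⊢
  exact_mod_cast h

theorem ncard_trinomial_roots_mem_of_pow_gcd_eq_two {n : ℕ} (hn : n ≠ 0) {k : ℕ}
    (h2 : p ^ k.gcd n = 2) {b c : E} (hb : b ^ p ^ n = b) (hc : c ^ p ^ n = c) (hc0 : c ≠ 0) :
    {x : E | x ^ p ^ n = x ∧ x ^ (p ^ k + 1) + b * x + c = 0}.ncard ∈ ({0, 1, 3} : Set ℕ) := by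
  lift b to frobeniusFixedField E p n using mem_frobeniusFixedField.mpr hb
  lift c to frobeniusFixedField E p n using mem_frobeniusFixedField.mpr hc
  have := finite_frobeniusFixedField (E := E) (p := p) hn
  have hfix : (fixedPoints (iterateFrobenius (frobeniusFixedField E p n) p k)).encard = 2 := by
    rw [encard_fixedPoints_iterateFrobenius hn, h2, Nat.cast_ofNat]
  have h := encard_riccatiSet_mem_of_encard_fixedPoints_eq_two hfix b (c := c) (by simpa using hc0)
  rw [setOf_trinomial_eq_image_riccatiSet, Set.ncard_image_of_injective _ Subtype.val_injective]
  rw [← (Set.toFinite _).cast_ncard_eq] at h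
  simp only [Set.mem_insert_iff, Set.mem_singleton_iff] at h ⊢
  exact_mod_cast h

theorem trinomial_root_count_cubic_ext_general {m n : ℕ} (hm : m ≠ 0) (hn : n ≠ 0) {q : ℕ}
    (hq : q = p ^ m) (ℓ : ℕ) {b c : E} (hb : b ^ q ^ n = b) (hc : c ^ q ^ n = c) (hc0 : c ≠ 0) :
    {x : E | x ^ q ^ n = x ∧ x ^ (p * q ^ ℓ + 1) + b * x + c = 0}.ncard ∈
        ({0, 1, 2, p ^ (m * ℓ + 1).gcd n + 1} : Set ℕ) ∧
      (p ^ (m * ℓ + 1).gcd n = 2 →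
        {x : E | x ^ q ^ n = x ∧ x ^ (p * q ^ ℓ + 1) + b * x + c = 0}.ncard ∈
          ({0, 1, 3} : Set ℕ)) := by
  have hqn : q ^ n = p ^ (m * n) := by rw [hq, pow_mul]
  have hqℓ : p * q ^ ℓ = p ^ (m * ℓ + 1) := by rw [hq, ← pow_mul, pow_succ']
  have hgcd : (m * ℓ + 1).gcd (m * n) = (m * ℓ + 1).gcd n :=
    Nat.Coprime.gcd_mul_left_cancel_right n (by simp)
  have hmn : m * n ≠ 0 := mul_ne_zero hm hn
  rw [hqn] at hb hc
  rw [hqn, hqℓ, ← hgcd]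
  exact ⟨ncard_trinomial_roots_mem hmn _ hb hc hc0,
    fun h2 => ncard_trinomial_roots_mem_of_pow_gcd_eq_two hmn h2 hb hc hc0⟩

end Frobenius

lemma three_dvd_mul_add_one_iff {ℓ : ℕ} (hℓ : ℓ.Coprime 3) (m : ℕ) :
    3 ∣ m * ℓ + 1 ↔ 3 ∣ m + ℓ := by
  have hℓ_mod : ℓ % 3 = 1 ∨ ℓ % 3 = 2 := by
    have := (Nat.Prime.coprime_iff_not_dvd Nat.prime_three).mp hℓ.symm
    omega
  have hmul_mod : m * ℓ % 3 = m % 3 * (ℓ % 3) % 3 := Nat.mul_mod m ℓ 3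
  rcases hℓ_mod with h | h <;> rw [h] at hmul_mod <;> omega

/-- Corollary 2.3: for `q = 2^m`, `a ∈ F_{q³}^*` and `ℓ` coprime to `3`, the number of
roots in `F_{q³}` of `X^(2q^ℓ+1) + X + a` lies in `{0,1,2,9}` if `m ≡ −ℓ (mod 3)`,
and in `{0,1,3}` otherwise. -/
theorem trinomial_root_count_cubic_ext
    (m : ℕ) (hm : 0 < m) (q : ℕ) (hq : q = 2 ^ m)
    (ℓ : ℕ) (hℓ : 0 < ℓ) (hℓ3 : Nat.Coprime ℓ 3)
    (a : K) (haq : a ^ q ^ 3 = a) (ha : a ≠ 0) :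
    (3 ∣ (m + ℓ) →
      {x : K | x ^ q ^ 3 = x ∧ x ^ (2 * q ^ ℓ + 1) + x + a = 0}.ncard ∈
        ({0, 1, 2, 9} : Set ℕ)) ∧
    (¬ 3 ∣ (m + ℓ) →
      {x : K | x ^ q ^ 3 = x ∧ x ^ (2 * q ^ ℓ + 1) + x + a = 0}.ncard ∈
        ({0, 1, 3} : Set ℕ)) := by
  have h := trinomial_root_count_cubic_ext_general (b := (1 : K)) hm.ne' three_ne_zero hq ℓ
    (one_pow _) haq ha
  simp only [one_mul] at h
  rw [← three_dvd_mul_add_one_iff hℓ3]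
  exact ⟨fun hdvd => by simpa [Nat.gcd_eq_right hdvd] using h.1,
    fun hdvd => h.2 (by rw [((Nat.prime_three.coprime_iff_not_dvd).mpr hdvd).symm, pow_one])⟩
end

section
/- For any nonzero elements a, e of the algebraic closure of F_2 with e² + ae + 1 = 0, the set of roots of X³ + X + a in the algebraic closure of F_2 equals {v + v⁻¹ : v in the algebraic closure of F_2 with v³ = e}. -/
open Polynomial

local notation "K" => AlgebraicClosure (ZMod 2)

/-!
The Dickson polynomial `D_n = dickson 1 1 n` satisfies `D_n (v + v⁻¹) = v ^ n + (v ^ n)⁻¹`, and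
over an algebraically closed field every `x` has the form `v + v⁻¹`. As `y + y⁻¹` determines `y` up
to inversion, and `v` may be replaced by `v⁻¹`, the solutions of `D_n x = e + e⁻¹` are the elements
`v + v⁻¹` with `v ^ n = e`. In characteristic two `D_3 = X ^ 3 - 3 X` is `X ^ 3 + X`, and
`e ^ 2 + a e + 1 = 0` says that `a = e + e⁻¹`.
-/

section Field

variable {F : Type*} [Field F]

theorem add_inv_eq_add_inv_iff {x y : F} (hx : x ≠ 0) (hy : y ≠ 0) :
    x + x⁻¹ = y + y⁻¹ ↔ x = y ∨ x⁻¹ = y := by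
  have factorization : x + x⁻¹ - (y + y⁻¹) = (x - y) * (x⁻¹ - y) * -y⁻¹ := by
    field
  rw [← sub_eq_zero, factorization]
  simp [hy, sub_eq_zero]

theorem eval_add_inv_dickson_one_one {v : F} (hv : v ≠ 0) (n : ℕ) :
    (dickson 1 (1 : F) n).eval (v + v⁻¹) = v ^ n + (v ^ n)⁻¹ := by
  rw [dickson_one_one_eval_add_inv v v⁻¹ (mul_inv_cancel₀ hv), inv_pow]

theorem sq_add_mul_add_one_eq_zero_iff {a e : F} (he : e ≠ 0) :
    e ^ 2 + a * e + 1 = 0 ↔ a = -(e + e⁻¹) := by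
  have factorization : e ^ 2 + a * e + 1 = e * (a + (e + e⁻¹)) := by
    field
  rw [factorization, mul_eq_zero, or_iff_right he, eq_neg_iff_add_eq_zero]

end Field

section IsAlgClosed

variable {F : Type*} [Field F] [IsAlgClosed F]

theorem exists_ne_zero_add_inv_eq (x : F) : ∃ v : F, v ≠ 0 ∧ v + v⁻¹ = x := by
  have degree_eq_two : (C 1 * X ^ 2 + C (-x) * X + C 1).degree = 2 :=
    degree_quadratic one_ne_zero
  obtain ⟨v, hv⟩ := IsAlgClosed.exists_root (C 1 * X ^ 2 + C (-x) * X + C 1)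
    (degree_eq_two.trans_ne two_ne_zero)
  have quadratic : v ^ 2 + -x * v + 1 = 0 := by simpa using hv
  have v_ne_zero : v ≠ 0 := by
    rintro rfl
    simp at quadratic
  exact ⟨v, v_ne_zero, (neg_inj.mp ((sq_add_mul_add_one_eq_zero_iff v_ne_zero).mp quadratic)).symm⟩

theorem eval_dickson_one_one_eq_add_inv_iff {e : F} (he : e ≠ 0) (n : ℕ) (x : F) :
    (dickson 1 (1 : F) n).eval x = e + e⁻¹ ↔ ∃ v : F, v ≠ 0 ∧ v ^ n = e ∧ x = v + v⁻¹ := by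
  constructor
  · intro hx
    obtain ⟨v, hv, rfl⟩ := exists_ne_zero_add_inv_eq x
    rw [eval_add_inv_dickson_one_one hv, add_inv_eq_add_inv_iff (pow_ne_zero n hv) he] at hx
    rcases hx with pow_eq | inv_pow_eq
    · exact ⟨v, hv, pow_eq, rfl⟩
    · exact ⟨v⁻¹, inv_ne_zero hv, by rw [inv_pow, inv_pow_eq], by rw [inv_inv, add_comm]⟩
  · rintro ⟨v, hv, rfl, rfl⟩
    exact eval_add_inv_dickson_one_one hv n

end IsAlgClosed

theorem dickson_one_one_three (R : Type*) [CommRing R] :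
    dickson 1 (1 : R) 3 = X ^ 3 - 3 * X := by
  rw [dickson_add_two, dickson_two, dickson_one, C_1]
  push_cast
  ring

theorem dickson_one_one_three_of_charP_two (R : Type*) [CommRing R] [CharP R 2] :
    dickson 1 (1 : R) 3 = X ^ 3 + X := by
  rw [dickson_one_one_three]
  linear_combination -2 * X * CharTwo.two_eq_zero (R := R[X])

theorem cubic_roots_via_cube_roots_general {F : Type*} [Field F] [IsAlgClosed F] [CharP F 2]
    (a e : F) (he : e ^ 2 + a * e + 1 = 0) :
    {x : F | x ^ 3 + x + a = 0} = {x : F | ∃ v : F, v ^ 3 = e ∧ x = v + v⁻¹} := by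
  have e_ne_zero : e ≠ 0 := by
    rintro rfl
    simp at he
  have a_eq : a = e + e⁻¹ := by
    rw [(sq_add_mul_add_one_eq_zero_iff e_ne_zero).mp he, CharTwo.neg_eq]
  ext x
  calc x ^ 3 + x + a = 0
    _ ↔ (dickson 1 (1 : F) 3).eval x = e + e⁻¹ := by
      rw [CharTwo.add_eq_zero, a_eq, dickson_one_one_three_of_charP_two]
      simp
    _ ↔ ∃ v : F, v ≠ 0 ∧ v ^ 3 = e ∧ x = v + v⁻¹ :=
      eval_dickson_one_one_eq_add_inv_iff e_ne_zero 3 x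
    _ ↔ ∃ v : F, v ^ 3 = e ∧ x = v + v⁻¹ :=
      exists_congr fun v ↦ and_iff_right_of_imp fun h ↦
        ne_zero_pow three_ne_zero (h.1 ▸ e_ne_zero)

/-- Lemma 2.5: for nonzero `a, e` in the algebraic closure of `F_2` with `e² + ae + 1 = 0`,
the roots of `X³ + X + a` are exactly the elements `v + v⁻¹` with `v³ = e`. -/
theorem cubic_roots_via_cube_roots
    (a e : K) (ha : a ≠ 0) (he0 : e ≠ 0) (he : e ^ 2 + a * e + 1 = 0) :
    {x : K | x ^ 3 + x + a = 0} = {x : K | ∃ v : K, v ^ 3 = e ∧ x = v + v⁻¹} :=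
  cubic_roots_via_cube_roots_general a e he
end

section
/- For any a ∈ F_q^* with Tr(1/a) = Tr(1), any nonnegative integer ℓ divisible by 3, and any e ∈ F_{q²}^* with e² + ae + 1 = 0, the set Γ of roots in F_{q³} of X^(2q^ℓ+1) + X + a has exactly three elements, and Γ = {v + v⁻¹ : v ∈ F_{q⁶}, v³ = e}. -/
open Polynomial

local notation "K" => AlgebraicClosure (ZMod 2)

/-!
Write `a = e + e⁻¹`. The substitution `x = v + v⁻¹` turns `x³ + x = a` into `v³ + v⁻³ = e + e⁻¹`,
so the three cube roots `v` of `e` give the three roots of the cubic, and for `x ∈ F_{q³}` and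
`3 ∣ ℓ` the given polynomial takes the same value as the cubic. It remains to see that
`v + v⁻¹ ∈ F_{q³}`. Since `z = (e + 1)⁻¹` satisfies `z² + z = a⁻¹`, the trace condition says
`z^q = z + m`, that is, `e^q = e^ε` for the sign `ε = (-1)^m`, which is congruent to `q` modulo
`3`. As `3 (q - ε)` divides `q³ - ε³`, this lifts to `v^(q³) = v^ε`.
-/

section General

theorem sum_range_pow_char_sub_self {R : Type*} [CommRing R] (p : ℕ) [Fact p.Prime] [CharP R p]
    (y : R) (n : ℕ) : ∑ i ∈ Finset.range n, (y ^ p - y) ^ p ^ i = y ^ p ^ n - y := by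
  simp_rw [sub_pow_char_pow, ← pow_mul, ← pow_succ']
  simpa using Finset.sum_range_sub (fun i ↦ y ^ p ^ i) n

theorem pow_pow_eq_self_of_dvd {M : Type*} [Monoid M] {x : M} {q k n : ℕ} (hx : x ^ q ^ k = x)
    (hkn : k ∣ n) : x ^ q ^ n = x := by
  have hperiodic : Function.IsPeriodicPt (· ^ q) k x := by
    simpa only [Function.IsPeriodicPt, Function.IsFixedPt, pow_iterate] using hx
  simpa only [Function.IsPeriodicPt, Function.IsFixedPt, pow_iterate] using
    hperiodic.trans_dvd hkn

theorem mul_sub_dvd_pow_sub_pow {R : Type*} [CommRing R] {n : ℕ} {r s : R}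
    (h : (n : R) ∣ r - s) : (n : R) * (r - s) ∣ r ^ n - s ^ n := by
  rw [← (Commute.all r s).geom_sum₂_mul]
  exact mul_dvd_mul_right (dvd_geom_sum₂_self h) _

theorem zpow_pow_eq_zpow_pow {G : Type*} [GroupWithZero G] {g : G} (hg : g ≠ 0) {n : ℕ} {r s : ℤ}
    (hrs : (n : ℤ) ∣ r - s) (h : (g ^ n) ^ r = (g ^ n) ^ s) : g ^ r ^ n = g ^ s ^ n := by
  have hone : g ^ ((n : ℤ) * (r - s)) = 1 := by
    rw [zpow_mul, zpow_natCast, zpow_sub₀ (pow_ne_zero n hg), h,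
      div_self (zpow_ne_zero s (pow_ne_zero n hg))]
  obtain ⟨c, hc⟩ := mul_sub_dvd_pow_sub_pow hrs
  rw [← sub_add_cancel (r ^ n) (s ^ n), hc, zpow_add₀ hg, zpow_mul, hone, one_zpow, one_mul]

theorem add_inv_eq_add_inv_iff_s12 {F : Type*} [Field F] {u v : F} (hu : u ≠ 0) (hv : v ≠ 0) :
    u + u⁻¹ = v + v⁻¹ ↔ u = v ∨ u = v⁻¹ := by
  have hfactor : u * v * (u + u⁻¹ - (v + v⁻¹)) = (u - v) * (u * v - 1) := by
    field_simp
    ring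
  rw [← sub_eq_zero, ← mul_right_inj' (mul_ne_zero hu hv), hfactor, mul_zero, mul_eq_zero,
    sub_eq_zero, sub_eq_zero, mul_eq_one_iff_eq_inv₀ hv]

theorem injOn_add_inv_setOf_pow_eq {F : Type*} [Field F] {e : F} {n : ℕ} (hn : n ≠ 0)
    (he : e ≠ e⁻¹) : Set.InjOn (fun v : F ↦ v + v⁻¹) {v | v ^ n = e} := by
  rintro u rfl v (hv : v ^ n = u ^ n) huv
  have he0 : u ^ n ≠ 0 := fun h ↦ he (by rw [h, inv_zero])
  have hu0 : u ≠ 0 := ne_zero_pow hn he0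
  have hv0 : v ≠ 0 := ne_zero_pow hn (hv ▸ he0)
  refine ((add_inv_eq_add_inv_iff_s12 hu0 hv0).1 huv).resolve_right ?_
  rintro rfl
  exact he (by rw [← hv, ← inv_pow, ← hv])

theorem ncard_setOf_pow_eq {F : Type*} [Field F] [IsSepClosed F] (n : ℕ) [NeZero (n : F)] {e : F}
    (he : e ≠ 0) : {v : F | v ^ n = e}.ncard = n := by
  classical
  have hn : 0 < n := Nat.pos_of_ne_zero fun h ↦ NeZero.ne (n : F) (by simp [h])
  obtain ⟨ζ, hζ⟩ := HasEnoughRootsOfUnity.exists_primitiveRoot F n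
  have hset : {v : F | v ^ n = e} = nthRootsFinset n e := by
    ext v
    simp [hn]
  rw [hset, Set.ncard_coe_finset, nthRootsFinset_def,
    Multiset.toFinset_card_of_nodup (hζ.nthRoots_nodup he), hζ.card_nthRoots,
    if_pos (IsSepClosed.exists_pow_nat_eq e n)]

theorem setOf_cubic_eq_rootSet {R : Type*} [CommRing R] [IsDomain R] (b c : R) :
    {x : R | x ^ 3 + b * x + c = 0} = (X ^ 3 + C b * X + C c : R[X]).rootSet R := by
  have hmonic : (X ^ 3 + C b * X + C c : R[X]).Monic := by monicity!
  ext x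
  simp [mem_rootSet, hmonic.ne_zero]

theorem eq_rootSet_of_subset_of_natDegree_le_ncard {R : Type*} [CommRing R] [IsDomain R]
    {p : R[X]} {S : Set R} (hS : S ⊆ p.rootSet R) (hp : p.natDegree ≤ S.ncard) :
    S = p.rootSet R :=
  Set.eq_of_subset_of_ncard_le hS ((ncard_rootSet_le p R).trans hp) (rootSet_finite p R)

theorem add_inv_pow_three {F : Type*} [Field F] {v : F} (hv : v ≠ 0) :
    (v + v⁻¹) ^ 3 = v ^ 3 + (v ^ 3)⁻¹ + 3 * (v + v⁻¹) := by
  field_simp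
  ring

theorem zpow_neg_one_pow_add_inv {F : Type*} [DivisionRing F] (v : F) (m : ℕ) :
    v ^ (-1 : ℤ) ^ m + (v ^ (-1 : ℤ) ^ m)⁻¹ = v + v⁻¹ := by
  rcases neg_one_pow_eq_or ℤ m with h | h
  · rw [h, zpow_one]
  · rw [h, zpow_neg_one, inv_inv, add_comm]

theorem pow_sq_eq_self_of_pow_eq_zpow_neg_one_pow {G : Type*} [DivisionMonoid G] {v : G}
    {n m : ℕ} (h : v ^ n = v ^ (-1 : ℤ) ^ m) : v ^ n ^ 2 = v := by
  rw [sq, pow_mul, h, ← zpow_natCast, zpow_comm, zpow_natCast, h, ← zpow_mul, ← mul_pow]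
  simp

theorem pow_two_pow_pow_three_eq_zpow_neg_one_pow {G : Type*} [GroupWithZero G] {v : G}
    (hv : v ≠ 0) {m : ℕ} (h : (v ^ 3) ^ 2 ^ m = (v ^ 3) ^ (-1 : ℤ) ^ m) :
    v ^ (2 ^ m) ^ 3 = v ^ (-1 : ℤ) ^ m := by
  have hdvd : ((3 : ℕ) : ℤ) ∣ 2 ^ m - (-1) ^ m := by
    simpa using sub_dvd_pow_sub_pow (2 : ℤ) (-1) m
  have hlift : v ^ ((2 : ℤ) ^ m) ^ 3 = v ^ ((-1 : ℤ) ^ m) ^ 3 :=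
    zpow_pow_eq_zpow_pow hv hdvd (by exact_mod_cast h)
  rw [pow_right_comm (-1), Odd.neg_one_pow (by decide)] at hlift
  exact_mod_cast hlift

theorem setOf_pow_two_mul_pow_add_one_eq {R : Type*} [Semiring R] (a : R) (q : ℕ) {ℓ : ℕ}
    (hℓ : 3 ∣ ℓ) : {x : R | x ^ q ^ 3 = x ∧ x ^ (2 * q ^ ℓ + 1) + x + a = 0} =
      {x | x ^ q ^ 3 = x} ∩ {x | x ^ 3 + x + a = 0} := by
  ext x
  refine and_congr_right fun hx ↦ ?_
  rw [pow_succ, mul_comm 2, pow_mul, pow_pow_eq_self_of_dvd hx hℓ, ← pow_succ, Set.mem_ofPred_eq]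

end General

section CharTwo

variable {F : Type*} [Field F] [CharP F 2]

theorem sq_add_self_inv_add_one {e : F} (he0 : e ≠ 0) (he1 : e ≠ 1) :
    (e + 1)⁻¹ ^ 2 + (e + 1)⁻¹ = (e + e⁻¹)⁻¹ := by
  have hadd : e + 1 ≠ 0 := CharTwo.add_eq_zero.not.2 he1
  have hsum : e + e⁻¹ = (e + 1) ^ 2 / e := by
    rw [CharTwo.add_sq]
    field_simp
  rw [hsum]
  field_simp
  linear_combination CharTwo.two_eq_zero (R := F)

theorem inv_add_one_add_one {e : F} (he0 : e ≠ 0) (he1 : e ≠ 1) :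
    (e + 1)⁻¹ + 1 = (e⁻¹ + 1)⁻¹ := by
  have hadd : e + 1 ≠ 0 := CharTwo.add_eq_zero.not.2 he1
  have hquot : e⁻¹ + 1 = (e + 1) / e := by
    field_simp
    ring
  rw [hquot]
  field_simp
  linear_combination CharTwo.two_eq_zero (R := F)

theorem pow_two_pow_eq_zpow_neg_one_pow_of_sum_eq {e : F} (he0 : e ≠ 0) (he1 : e ≠ 1) {m : ℕ}
    (htr : ∑ i ∈ Finset.range m, (e + e⁻¹)⁻¹ ^ 2 ^ i = (m : F)) :
    e ^ 2 ^ m = e ^ (-1 : ℤ) ^ m := by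
  have htrace : (e ^ 2 ^ m + 1)⁻¹ = (e + 1)⁻¹ + m := by
    have htele := sum_range_pow_char_sub_self 2 (e + 1)⁻¹ m
    simp_rw [CharTwo.sub_eq_add, sq_add_self_inv_add_one he0 he1] at htele
    rw [htr, inv_pow, add_pow_char_pow, one_pow] at htele
    rw [htele, add_comm (_ ^ _ + _)⁻¹, CharTwo.add_cancel_left]
  rw [CharTwo.natCast_eq_ite] at htrace
  rcases Nat.even_or_odd m with hm | hm
  · rw [if_pos hm, add_zero] at htrace
    rw [hm.neg_one_pow, zpow_one]
    exact add_right_cancel (inv_injective htrace)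
  · rw [if_neg (Nat.not_even_iff_odd.2 hm)] at htrace
    rw [hm.neg_one_pow, zpow_neg_one]
    exact add_right_cancel (inv_injective (htrace.trans (inv_add_one_add_one he0 he1)))

theorem ncard_image_add_inv_setOf_pow_three [IsSepClosed F] {e : F} (he0 : e ≠ 0)
    (he1 : e ≠ 1) : ((fun v : F ↦ v + v⁻¹) '' {v | v ^ 3 = e}).ncard = 3 := by
  have : NeZero ((3 : ℕ) : F) := ⟨by
    rw [CharTwo.natCast_eq_ite, if_neg (by decide)]
    exact one_ne_zero⟩
  have he : e ≠ e⁻¹ := fun h ↦ he1 (CharTwo.sq_inj.1 (by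
    rw [one_pow, sq, ← mul_inv_cancel₀ he0, ← h]))
  rw [(injOn_add_inv_setOf_pow_eq three_ne_zero he).ncard_image, ncard_setOf_pow_eq 3 he0]

theorem image_add_inv_setOf_pow_three [IsSepClosed F] {e : F} (he0 : e ≠ 0) (he1 : e ≠ 1) :
    (fun v : F ↦ v + v⁻¹) '' {v | v ^ 3 = e} = {x | x ^ 3 + x + (e + e⁻¹) = 0} := by
  have hcubic := setOf_cubic_eq_rootSet 1 (e + e⁻¹)
  simp only [one_mul] at hcubic
  rw [hcubic]
  refine eq_rootSet_of_subset_of_natDegree_le_ncard ?_ ?_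
  · rw [← hcubic]
    rintro _ ⟨v, rfl, rfl⟩
    have hv : v ≠ 0 := ne_zero_pow three_ne_zero he0
    change (v + v⁻¹) ^ 3 + (v + v⁻¹) + (v ^ 3 + (v ^ 3)⁻¹) = 0
    rw [add_inv_pow_three hv]
    linear_combination (v ^ 3 + (v ^ 3)⁻¹ + 2 * (v + v⁻¹)) * CharTwo.two_eq_zero (R := F)
  · rw [ncard_image_add_inv_setOf_pow_three he0 he1]
    compute_degree

theorem add_inv_pow_two_pow_pow_eq_self {v : F} {n k m : ℕ}
    (h : v ^ (2 ^ n) ^ k = v ^ (-1 : ℤ) ^ m) : (v + v⁻¹) ^ (2 ^ n) ^ k = v + v⁻¹ := by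
  rw [← pow_mul] at h ⊢
  rw [add_pow_char_pow, inv_pow, h, zpow_neg_one_pow_add_inv]

theorem ne_zero_and_eq_add_inv_of_sq_add_mul_add_one_eq_zero {a e : F}
    (he : e ^ 2 + a * e + 1 = 0) : e ≠ 0 ∧ a = e + e⁻¹ := by
  have he0 : e ≠ 0 := by
    rintro rfl
    simp at he
  refine ⟨he0, ?_⟩
  field_simp
  linear_combination he - (e ^ 2 + 1) * CharTwo.two_eq_zero (R := F)

theorem roots_ell_div_three_general [IsSepClosed F] (m q : ℕ) (hq : q = 2 ^ m)
    (a : F) (ha : a ≠ 0) (htr : ∑ i ∈ Finset.range m, a⁻¹ ^ 2 ^ i = (m : F))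
    (ℓ : ℕ) (hℓ : 3 ∣ ℓ) (e : F) (he : e ^ 2 + a * e + 1 = 0)
    (Γ : Set F) (hΓ : Γ = {x : F | x ^ q ^ 3 = x ∧ x ^ (2 * q ^ ℓ + 1) + x + a = 0}) :
    Γ.ncard = 3 ∧ Γ = {x : F | ∃ v : F, v ^ q ^ 6 = v ∧ v ^ 3 = e ∧ x = v + v⁻¹} := by
  obtain ⟨he0, rfl⟩ := ne_zero_and_eq_add_inv_of_sq_add_mul_add_one_eq_zero he
  have he1 : e ≠ 1 := by
    rintro rfl
    exact ha (by rw [inv_one, CharTwo.add_self_eq_zero])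
  subst hq
  have hcube : ∀ v : F, v ^ 3 = e → v ^ (2 ^ m) ^ 3 = v ^ (-1 : ℤ) ^ m := by
    rintro v rfl
    exact pow_two_pow_pow_three_eq_zpow_neg_one_pow (ne_zero_pow three_ne_zero he0)
      (pow_two_pow_eq_zpow_neg_one_pow_of_sum_eq he0 he1 htr)
  have hfixed : (fun v : F ↦ v + v⁻¹) '' {v | v ^ 3 = e} ⊆ {x | x ^ (2 ^ m) ^ 3 = x} := by
    rintro _ ⟨v, hv, rfl⟩
    exact add_inv_pow_two_pow_pow_eq_self (hcube v hv)
  have himage : Γ = (fun v : F ↦ v + v⁻¹) '' {v | v ^ 3 = e} := by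
    rw [hΓ, setOf_pow_two_mul_pow_add_one_eq _ _ hℓ, ← image_add_inv_setOf_pow_three he0 he1,
      Set.inter_eq_right.2 hfixed]
  have hsix : ∀ v : F, v ^ 3 = e → v ^ (2 ^ m) ^ 6 = v := fun v hv ↦ by
    rw [pow_mul (2 ^ m) 3 2, pow_sq_eq_self_of_pow_eq_zpow_neg_one_pow (hcube v hv)]
  refine ⟨himage ▸ ncard_image_add_inv_setOf_pow_three he0 he1, himage.trans (Set.ext fun x ↦ ?_)⟩
  exact ⟨fun ⟨v, hv, hx⟩ ↦ ⟨v, hsix v hv, hv, hx.symm⟩, fun ⟨v, _, hv, hx⟩ ↦ ⟨v, hv, hx.symm⟩⟩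

end CharTwo

/-- Corollary 2.7: for `q = 2^m`, `a ∈ F_q^*` with `Tr(1/a) = Tr(1)`, `3 ∣ ℓ`, and
`e ∈ F_{q²}^*` with `e² + ae + 1 = 0`, the set `Γ` of roots in `F_{q³}` of
`X^(2q^ℓ+1) + X + a` has size `3` and equals `{v + v⁻¹ : v ∈ F_{q⁶}, v³ = e}`. -/
theorem roots_ell_div_three
    (m : ℕ) (hm : 0 < m) (q : ℕ) (hq : q = 2 ^ m)
    (a : K) (ha : a ≠ 0) (haq : a ^ q = a)
    (htr : ∑ i ∈ Finset.range m, a⁻¹ ^ 2 ^ i = (m : K))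
    (ℓ : ℕ) (hℓ : 3 ∣ ℓ)
    (e : K) (he0 : e ≠ 0) (heF : e ^ q ^ 2 = e) (he : e ^ 2 + a * e + 1 = 0)
    (Γ : Set K)
    (hΓ : Γ = {x : K | x ^ q ^ 3 = x ∧ x ^ (2 * q ^ ℓ + 1) + x + a = 0}) :
    Γ.ncard = 3 ∧ Γ = {x : K | ∃ v : K, v ^ q ^ 6 = v ∧ v ^ 3 = e ∧ x = v + v⁻¹} := by
  exact roots_ell_div_three_general m q hq a ha htr ℓ hℓ e he Γ hΓ
end
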